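/- arXiv:1510.02903 — 2 statements merged into one kernel-verified Lean document; each statement's English description precedes it below -/
import Mathlib

section
/- Assume conditions (B1') and (B2') hold. Then for any real r ≥ 2 there exists a constant W̄*_r > 0, not depending on x or n, such that for every x ∈ X with υ*_{r,max}(x) < ∞ and g*_r(x) < ∞ and every n ≥ 2: E_x|W̄_n(g)|^r ≤ W̄*_r · (1 + υ*_{r,max}(x) + g*_r(x)) / n^{r/2}. -/
/-!
The chain has a Poisson equation, which reduces the additive functional to a martingale plus
boundary terms.

**Poisson equation.** Let `U = V_{1 mod p}`. The ergodicity bound for the residue class of `1`,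
taken at time `1`, is a drift bound `P U ≤ C₁ U`; taken along the class it says
that `P ^ (p l + 1) g̃` converges to a constant geometrically in the `U`-weighted norm. The drift
bound fills in the other residues, so `P ^ n g̃ → c` geometrically for all `n`, and all the
`lam ι (g̃)` equal `c`. Hence `G = ∑ (P ^ n g̃ - c)` converges, satisfies `|G| ≤ A U` and
`G - P G = g̃ - c` (`exists_poisson_of_ergodic`).

**Decomposition.** With `Δ(v, u) = g(v, u) - c + G(v) - G(u)`, which has `P`-mean zero in `v`,
`∑_{j ≤ n} (g(X_j, X_{j-1}) - c) = ∑_{j ≤ n} Δ(X_j, X_{j-1}) + G(X_0) - G(X_n)`, and the first sum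
is a martingale.

**Moments of `G(X_k)`.** The `r`-th moment of `U` is controlled only at times congruent to `1`
modulo `p`. At any other time one goes back from the next such time through
`G = (g̃ - c) + P G` and Jensen, a bounded number of times (`poisson_moment`).

**Martingale moments.** Instead of the Burkholder inequality, the scalar bound
`|a + b| ^ r ≤ (1 + C / s) |a| ^ r + r a |a| ^ (r - 2) b + C s ^ (r / 2 - 1) |b| ^ r`
(`rpow_add_le_aux`) is used with `s = n`. Its middle term has mean zero, so the moment `m_k` of the
`k`-th partial sum satisfies `m_{k+1} ≤ (1 + C / n) m_k + C n ^ (r / 2 - 1) B`, and after `n` steps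
`m_n` is at most a constant multiple of `n ^ (r / 2) B` (`martingale_moment`).
-/

open MeasureTheory ProbabilityTheory Filter Set ENNReal

noncomputable section

/-- A time-homogeneous Markov chain on a measurable space `𝒳`: a Markov transition kernel
`K` together with, for every starting point `x`, the law `law x` (on the path space
`ℕ → 𝒳`) of the chain started at `x`, characterized by `X 0 = x` a.s. and the Markov
property with transition kernel `K`. -/
structure MarkovChain (𝒳 : Type) [MeasurableSpace 𝒳] where
  K : Kernel 𝒳 𝒳
  isMarkov : IsMarkovKernel K
  law : 𝒳 → Measure (ℕ → 𝒳)
  law_prob : ∀ x, IsProbabilityMeasure (law x)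
  law_zero : ∀ x, law x {ω | ω 0 = x} = 1
  law_markov : ∀ (x : 𝒳) (n : ℕ) (A : Set 𝒳), MeasurableSet A →
    ∀ B : Set (ℕ → 𝒳),
      MeasurableSet[MeasurableSpace.comap
        (fun (ω : ℕ → 𝒳) (i : Fin (n + 1)) => ω i) inferInstance] B →
      law x ({ω | ω (n + 1) ∈ A} ∩ B) = ∫⁻ ω in B, K (ω n) A ∂(law x)

namespace MarkovChain

variable {𝒳 : Type} [MeasurableSpace 𝒳] (M : MarkovChain 𝒳)

/-- `g̃(u) = ∫ g(v,u) P(u,dv)`. -/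
def gtilde (g : 𝒳 → 𝒳 → ℝ) (u : 𝒳) : ℝ := ∫ v, g v u ∂(M.K u)

/-- `υ*_r(x) = sup_{n ≥ 0} E_x V(X_n)^r`. -/
def upsStar (V : 𝒳 → ℝ) (r : ℝ) (x : 𝒳) : ℝ≥0∞ :=
  ⨆ n : ℕ, ∫⁻ ω, ENNReal.ofReal (V (ω n) ^ r) ∂(M.law x)

/-- `g*_r(x) = sup_{j ≥ 1} E_x |g(X_j, X_{j-1})|^r`. -/
def gStar (g : 𝒳 → 𝒳 → ℝ) (r : ℝ) (x : 𝒳) : ℝ≥0∞ :=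
  ⨆ j : ℕ, ∫⁻ ω, ENNReal.ofReal (|g (ω (j + 1)) (ω j)| ^ r) ∂(M.law x)

end MarkovChain

/-! ### A scalar inequality -/

/-- Second-order expansion of `|a + b| ^ r` with a free parameter `s`. If `|a| < r |b|`, every term
is at most a multiple of `|b| ^ r`. Otherwise, with `t = b / a`, `(1 + t) ^ r ≤ exp (r t)` is at most
`1 + r t + (r t) ^ 2`, and the quadratic term goes into the first or the last summand according
to whether `t ^ 2 ≤ 1 / s`. -/
lemma rpow_add_le_aux {r : ℝ} (hr : 2 ≤ r) : ∃ C : ℝ, 1 ≤ C ∧ ∀ s a b : ℝ, 1 ≤ s →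
    |a + b| ^ r ≤ (1 + C / s) * |a| ^ r + r * (a * |a| ^ (r - 2)) * b
      + C * s ^ (r / 2 - 1) * |b| ^ r := by
  have hr0 : 0 < r := by linarith
  have h1r : (1 : ℝ) ≤ (1 + r) ^ r := Real.one_le_rpow (by linarith) hr0.le
  have h2r : (0 : ℝ) ≤ r ^ r := by positivity
  refine ⟨r ^ 2 + (1 + r) ^ r + r ^ r, by nlinarith, ?_⟩
  intro s a b hs
  set C := r ^ 2 + (1 + r) ^ r + r ^ r with hC
  have hs0 : 0 < s := by linarith
  have hC1 : 1 ≤ C := by nlinarith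
  have hsp : 1 ≤ s ^ (r / 2 - 1) := Real.one_le_rpow hs (by linarith)
  have hbr : 0 ≤ |b| ^ r := by positivity
  have har : 0 ≤ |a| ^ r := by positivity
  rcases lt_or_ge |a| (r * |b|) with hab | hab
  · have e1 : |a + b| ^ r ≤ (1 + r) ^ r * |b| ^ r := by
      rw [← Real.mul_rpow (by positivity) (abs_nonneg b)]
      apply Real.rpow_le_rpow (abs_nonneg _) _ hr0.le
      linarith [abs_add_le a b]
    have e2 : -(r * (a * |a| ^ (r - 2)) * b) ≤ r ^ r * |b| ^ r := by
      have hb : 0 < |b| := by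
        by_contra h
        have : |b| = 0 := le_antisymm (not_lt.1 h) (abs_nonneg b)
        rw [this] at hab; linarith [abs_nonneg a]
      have h3 : |a| ^ (r - 2) ≤ (r * |b|) ^ (r - 2) :=
        Real.rpow_le_rpow (abs_nonneg _) hab.le (by linarith)
      calc -(r * (a * |a| ^ (r - 2)) * b) ≤ |r * (a * |a| ^ (r - 2)) * b| := neg_le_abs _
        _ = r * (|a| * |a| ^ (r - 2)) * |b| := by
            rw [abs_mul, abs_mul, abs_mul, abs_of_pos hr0, abs_of_nonneg (a := |a| ^ (r - 2)) (by positivity)]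
        _ ≤ r * ((r * |b|) * (r * |b|) ^ (r - 2)) * |b| := by gcongr
        _ = (r * |b|) ^ (2 : ℝ) * (r * |b|) ^ (r - 2) := by rw [Real.rpow_two]; ring
        _ = r ^ r * |b| ^ r := by
            rw [← Real.rpow_add (by positivity), ← Real.mul_rpow hr0.le hb.le]; congr 1; ring
    have e3 : C * 1 * |b| ^ r ≤ C * s ^ (r / 2 - 1) * |b| ^ r := by gcongr
    have e4 : 0 ≤ C / s * |a| ^ r := by positivity
    have e5 : 0 ≤ r ^ 2 * |b| ^ r := by positivity
    nlinarith
  · by_cases ha : a = 0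
    · subst ha
      have hb : |b| = 0 := by
        have := abs_nonneg b
        simp only [abs_zero] at hab
        nlinarith
      have hb' : b = 0 := abs_eq_zero.1 hb
      subst hb'
      simp [Real.zero_rpow hr0.ne']
    · have ha0 : 0 < |a| := abs_pos.2 ha
      set t := b / a with ht
      have hbt : b = a * t := by rw [ht]; field_simp
      have htr : |r * t| ≤ 1 := by
        rw [ht, abs_mul, abs_div, abs_of_pos hr0, ← mul_div_assoc, div_le_one ha0]; exact hab
      have ht1 : |t| ≤ 1 := by
        rw [abs_mul, abs_of_pos hr0] at htr
        nlinarith [abs_nonneg t]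
      have ht1' : 0 ≤ 1 + t := by linarith [(abs_le.1 ht1).1]
      have e1 : (1 + t) ^ r ≤ 1 + r * t + (r * t) ^ 2 := by
        have := Real.abs_exp_sub_one_sub_id_le htr
        have h2 := (abs_le.1 this).2
        have h3 : (1 + t) ^ r ≤ Real.exp t ^ r :=
          Real.rpow_le_rpow ht1' (by linarith [Real.add_one_le_exp t]) hr0.le
        rw [← Real.exp_mul, mul_comm t r] at h3
        linarith
      have e2 : |a + b| ^ r = |a| ^ r * (1 + t) ^ r := by
        rw [hbt, show a + a * t = a * (1 + t) by ring, abs_mul, abs_of_nonneg ht1',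
          Real.mul_rpow (abs_nonneg _) ht1']
      have e3 : |a| ^ r = |a| ^ 2 * |a| ^ (r - 2) := by
        rw [← Real.rpow_two, ← Real.rpow_add ha0]; congr 1; ring
      have e4 : r * (a * |a| ^ (r - 2)) * b = |a| ^ r * (r * t) := by
        rw [e3, hbt, sq_abs]; ring
      have e5 : t ^ 2 * |a| ^ r ≤ |a| ^ r / s + s ^ (r / 2 - 1) * |b| ^ r := by
        have hq : 0 ≤ s ^ (r / 2 - 1) * |b| ^ r := by positivity
        have hq' : 0 ≤ |a| ^ r / s := by positivity
        rcases le_or_gt (t ^ 2) (1 / s) with h | h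
        · have : t ^ 2 * |a| ^ r ≤ 1 / s * |a| ^ r := by gcongr
          rw [one_div_mul_eq_div] at this
          linarith
        · have hst : 1 ≤ s * t ^ 2 := by
            rw [div_lt_iff₀ hs0] at h; linarith
          have h5 : (1 : ℝ) ≤ (s * t ^ 2) ^ (r / 2 - 1) := Real.one_le_rpow hst (by linarith)
          have ht0 : 0 < |t| := by
            rw [abs_pos]; rintro h0; rw [h0] at hst; norm_num at hst
          have h6 : (s * t ^ 2) ^ (r / 2 - 1) = s ^ (r / 2 - 1) * |t| ^ (r - 2) := by
            rw [Real.mul_rpow hs0.le (sq_nonneg t), ← sq_abs, ← Real.rpow_two,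
              ← Real.rpow_mul (abs_nonneg t)]
            congr 2; ring
          have h7 : |b| ^ r = |t| ^ 2 * |t| ^ (r - 2) * |a| ^ r := by
            rw [hbt, abs_mul, Real.mul_rpow (abs_nonneg _) (abs_nonneg _), ← Real.rpow_two,
              ← Real.rpow_add ht0, mul_comm]
            congr 2; ring
          have h8 : t ^ 2 * |a| ^ r * 1 ≤ t ^ 2 * |a| ^ r * (s * t ^ 2) ^ (r / 2 - 1) := by gcongr
          rw [h6] at h8
          rw [h7, sq_abs]
          nlinarith
      have e6 : r ^ 2 ≤ C := by nlinarith
      have e7 : (r * t) ^ 2 * |a| ^ r ≤ C * (|a| ^ r / s + s ^ (r / 2 - 1) * |b| ^ r) := by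
        calc (r * t) ^ 2 * |a| ^ r = r ^ 2 * (t ^ 2 * |a| ^ r) := by ring
          _ ≤ C * (|a| ^ r / s + s ^ (r / 2 - 1) * |b| ^ r) := by gcongr
      have e8 : |a| ^ r * (1 + t) ^ r ≤ |a| ^ r * (1 + r * t + (r * t) ^ 2) := by gcongr
      rw [e2, e4]
      have : C / s * |a| ^ r = C * (|a| ^ r / s) := by ring
      nlinarith

/-! ### The Markov property and the iterated kernels -/

namespace MarkovChain

variable {𝒳 : Type} [MeasurableSpace 𝒳] (M : MarkovChain 𝒳)

instance instMarkovK : IsMarkovKernel M.K := M.isMarkov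

instance instProbLaw (x : 𝒳) : IsProbabilityMeasure (M.law x) := M.law_prob x

/-- The law of the past up to time `n` together with the next state is the composition product
of the law of the past with the transition kernel evaluated at the last state. -/
lemma map_past_next (x : 𝒳) (n : ℕ) :
    (M.law x).map (fun ω => ((fun i : Fin (n + 1) => ω i), ω (n + 1))) =
      ((M.law x).map (fun ω (i : Fin (n + 1)) => ω i)) ⊗ₘ
        (M.K.comap (fun w : Fin (n + 1) → 𝒳 => w (Fin.last n)) (by fun_prop)) := by
  have hpast : Measurable (fun (ω : ℕ → 𝒳) (i : Fin (n + 1)) => ω i) := by fun_prop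
  have : IsProbabilityMeasure ((M.law x).map (fun ω (i : Fin (n + 1)) => ω i)) :=
    Measure.isProbabilityMeasure_map hpast.aemeasurable
  apply Measure.ext_prod
  intro s t hs ht
  rw [Measure.map_apply (by fun_prop) (hs.prod ht), Measure.compProd_apply_prod hs ht,
    setLIntegral_map hs (Kernel.measurable_coe _ ht) hpast]
  have h := M.law_markov x n t ht ((fun (ω : ℕ → 𝒳) (i : Fin (n + 1)) => ω i) ⁻¹' s)
    ⟨s, hs, rfl⟩
  simp only [Kernel.comap_apply, Fin.val_last]
  rw [← h]
  congr 1
  ext ω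
  simp [and_comm]

/-- The `n`-step transition kernel, built by taking one step of `K` first. -/
def iterK : ℕ → Kernel 𝒳 𝒳
  | 0 => Kernel.id
  | n + 1 => iterK n ∘ₖ M.K

instance instMarkovIter (n : ℕ) : IsMarkovKernel (M.iterK n) := by
  induction n with
  | zero => unfold iterK; infer_instance
  | succ n ih => unfold iterK; infer_instance

lemma iterK_succ' (n : ℕ) : M.iterK (n + 1) = M.K ∘ₖ M.iterK n := by
  induction n with
  | zero => simp [iterK]
  | succ n ih =>
    conv_lhs => rw [iterK, ih, Kernel.comp_assoc]
    rfl

lemma lintegral_succ (x : 𝒳) (n : ℕ) {F : 𝒳 → ℝ≥0∞} (hF : Measurable F) :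
    ∫⁻ ω, F (ω (n + 1)) ∂(M.law x) = ∫⁻ ω, ∫⁻ v, F v ∂(M.K (ω n)) ∂(M.law x) := by
  have hpast : Measurable (fun (ω : ℕ → 𝒳) (i : Fin (n + 1)) => ω i) := by fun_prop
  have : IsProbabilityMeasure ((M.law x).map (fun ω (i : Fin (n + 1)) => ω i)) :=
    Measure.isProbabilityMeasure_map hpast.aemeasurable
  have h1 : ∫⁻ ω, F (ω (n + 1)) ∂(M.law x) = ∫⁻ q, F q.2 ∂((M.law x).map
      (fun ω => ((fun i : Fin (n + 1) => ω i), ω (n + 1)))) := by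
    rw [lintegral_map (by fun_prop) (by fun_prop)]
  rw [h1, map_past_next, Measure.lintegral_compProd (by fun_prop),
    lintegral_map (Measurable.lintegral_kernel hF) hpast]
  simp

/-- The `n`-th marginal of the chain is the `n`-step kernel. Since `law x {ω | ω 0 = x} = 1` is
an outer-measure statement, singletons need not be measurable here. -/
lemma map_eval (x : 𝒳) (n : ℕ) : (M.law x).map (fun ω => ω n) = M.iterK n x := by
  induction n with
  | zero =>
    simp only [iterK, Kernel.id_apply]
    ext s hs
    rw [Measure.map_apply (by fun_prop) hs, Measure.dirac_apply' _ hs]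
    have key : ∀ t : Set 𝒳, MeasurableSet t → x ∈ t →
        M.law x ((fun ω : ℕ → 𝒳 => ω 0) ⁻¹' t) = 1 := by
      intro t ht hx
      apply le_antisymm prob_le_one
      rw [← M.law_zero x]
      apply measure_mono
      intro ω hω
      have hω' : ω 0 = x := hω
      simpa [hω'] using hx
    by_cases hx : x ∈ s
    · simp [hx, key s hs hx]
    · have h2 := key sᶜ hs.compl hx
      rw [preimage_compl, prob_compl_eq_one_iff (hs.preimage (by fun_prop))] at h2
      simp [hx, h2]
  | succ n ih =>
    refine Measure.ext_of_lintegral _ fun F hF => ?_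
    rw [lintegral_map hF (by fun_prop), lintegral_succ M x n hF, iterK_succ',
      Kernel.lintegral_comp _ _ _ hF, ← ih,
      lintegral_map (Measurable.lintegral_kernel hF) (by fun_prop)]

lemma lintegral_eval (x : 𝒳) (n : ℕ) {F : 𝒳 → ℝ≥0∞} (hF : Measurable F) :
    ∫⁻ ω, F (ω n) ∂(M.law x) = ∫⁻ y, F y ∂(M.iterK n x) := by
  rw [← map_eval, lintegral_map hF (by fun_prop)]

lemma integral_eval (x : 𝒳) (n : ℕ) {f : 𝒳 → ℝ} (hf : Measurable f) :
    ∫ ω, f (ω n) ∂(M.law x) = ∫ y, f y ∂(M.iterK n x) := by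
  rw [← map_eval, integral_map (measurable_pi_apply n).aemeasurable hf.aestronglyMeasurable]

lemma measurable_gtilde {g : 𝒳 → 𝒳 → ℝ} (hg : Measurable fun q : 𝒳 × 𝒳 => g q.1 q.2) :
    Measurable (M.gtilde g) := by
  have h : StronglyMeasurable (fun q : 𝒳 × 𝒳 => g q.2 q.1) :=
    (hg.comp measurable_swap).stronglyMeasurable
  exact (h.integral_kernel_prod_right' (κ := M.K)).measurable

/-- Conditional Jensen inequality along one step of the chain. -/
lemma lintegral_rpow_integral_le (x : 𝒳) (n : ℕ) {r : ℝ} (hr : 1 ≤ r) {f : 𝒳 → ℝ}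
    (hf : Measurable f) :
    ∫⁻ ω, ‖∫ v, f v ∂(M.K (ω n))‖ₑ ^ r ∂(M.law x) ≤ ∫⁻ ω, ‖f (ω (n + 1))‖ₑ ^ r ∂(M.law x) := by
  rw [lintegral_succ M x n (F := fun v => ‖f v‖ₑ ^ r) (by fun_prop)]
  refine lintegral_mono fun ω => ?_
  have hr0 : 0 < r := by linarith
  have h1 : ‖∫ v, f v ∂(M.K (ω n))‖ₑ ≤ (∫⁻ v, ‖f v‖ₑ ^ r ∂(M.K (ω n))) ^ (1 / r) := by
    refine (enorm_integral_le_lintegral_enorm _).trans ?_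
    have := eLpNorm'_le_eLpNorm'_of_exponent_le (μ := M.K (ω n)) zero_lt_one hr
      hf.aestronglyMeasurable
    simpa [eLpNorm'] using this
  calc _ ≤ ((∫⁻ v, ‖f v‖ₑ ^ r ∂(M.K (ω n))) ^ (1 / r)) ^ r := by gcongr
    _ = _ := by rw [← ENNReal.rpow_mul, one_div_mul_cancel hr0.ne', ENNReal.rpow_one]

end MarkovChain

/-! ### Moments of martingales driven by the chain -/

lemma integrable_cross {Ω : Type*} [MeasurableSpace Ω] {μ : Measure Ω} {r : ℝ} (hr : 2 ≤ r)
    {m d : Ω → ℝ} (hm : Measurable m) (hd : Measurable d)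
    (hmr : Integrable (fun ω => |m ω| ^ r) μ) (hdr : Integrable (fun ω => |d ω| ^ r) μ) :
    Integrable (fun ω => r * (m ω * |m ω| ^ (r - 2)) * d ω) μ := by
  have hr0 : 0 < r := by linarith
  refine ((hmr.add hdr).const_mul r).mono' (by fun_prop) (ae_of_all _ fun ω => ?_)
  have key : ∀ a b : ℝ, 0 ≤ a → 0 ≤ b → a * a ^ (r - 2) * b ≤ a ^ r + b ^ r := by
    intro a b ha hb
    set c := max a b with hc
    have hc0 : 0 ≤ c := le_max_of_le_left ha
    have h1 : a * a ^ (r - 2) * b ≤ c * c ^ (r - 2) * c := by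
      have : a ^ (r - 2) ≤ c ^ (r - 2) :=
        Real.rpow_le_rpow ha (le_max_left _ _) (by linarith)
      gcongr
      · exact le_max_left _ _
      · exact le_max_right _ _
    have h2 : c * c ^ (r - 2) * c = c ^ r := by
      rcases hc0.eq_or_lt with h | h
      · rw [← h, Real.zero_rpow hr0.ne']; simp
      · rw [show r = 2 + (r - 2) by ring, Real.rpow_add h, Real.rpow_two]; ring_nf
    have h3 : c ^ r ≤ a ^ r + b ^ r := by
      have := Real.rpow_nonneg ha r
      have := Real.rpow_nonneg hb r
      rcases max_choice a b with h | h <;> rw [hc, h] <;> linarith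
    linarith
  rw [Real.norm_eq_abs, abs_mul, abs_mul, abs_mul, abs_of_pos hr0,
    abs_of_nonneg (a := |m ω| ^ (r - 2)) (by positivity)]
  have := key |m ω| |d ω| (abs_nonneg _) (abs_nonneg _)
  simp only [Pi.add_apply]
  nlinarith

lemma integrable_rpow_add {Ω : Type*} [MeasurableSpace Ω] {μ : Measure Ω} {r : ℝ} (hr : 2 ≤ r)
    {m d : Ω → ℝ} (hm : Measurable m) (hd : Measurable d)
    (hmr : Integrable (fun ω => |m ω| ^ r) μ) (hdr : Integrable (fun ω => |d ω| ^ r) μ) :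
    Integrable (fun ω => |m ω + d ω| ^ r) μ := by
  obtain ⟨C, hC, h⟩ := rpow_add_le_aux hr
  refine (((hmr.const_mul (1 + C / 1)).add (integrable_cross hr hm hd hmr hdr)).add
    (hdr.const_mul (C * 1 ^ (r / 2 - 1)))).mono'
      (Measurable.aestronglyMeasurable (by fun_prop)) (ae_of_all _ fun ω => ?_)
  rw [Real.norm_eq_abs, abs_of_nonneg (by positivity)]
  exact h 1 _ _ le_rfl

namespace MarkovChain

variable {𝒳 : Type} [MeasurableSpace 𝒳] (M : MarkovChain 𝒳)

/-- Orthogonality of a function of the past and a martingale increment. -/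
lemma integral_past_mul_eq_zero (x : 𝒳) (n : ℕ) {D : 𝒳 → 𝒳 → ℝ}
    (hD : Measurable fun q : 𝒳 × 𝒳 => D q.1 q.2) (hD0 : ∀ u, ∫ v, D v u ∂(M.K u) = 0)
    {G : (Fin (n + 1) → 𝒳) → ℝ} (hG : Measurable G)
    (hint : Integrable (fun ω => G (fun i => ω i) * D (ω (n + 1)) (ω n)) (M.law x)) :
    ∫ ω, G (fun i => ω i) * D (ω (n + 1)) (ω n) ∂(M.law x) = 0 := by
  have hpast : Measurable (fun (ω : ℕ → 𝒳) (i : Fin (n + 1)) => ω i) := by fun_prop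
  have : IsProbabilityMeasure ((M.law x).map (fun ω (i : Fin (n + 1)) => ω i)) :=
    Measure.isProbabilityMeasure_map hpast.aemeasurable
  set H : (Fin (n + 1) → 𝒳) × 𝒳 → ℝ := fun q => G q.1 * D q.2 (q.1 (Fin.last n)) with hH
  have hHm : Measurable H := by
    refine (hG.comp measurable_fst).mul ?_
    exact hD.comp (measurable_snd.prodMk ((measurable_pi_apply _).comp measurable_fst))
  have hmeas : Measurable (fun ω : ℕ → 𝒳 => ((fun i : Fin (n + 1) => ω i), ω (n + 1))) := by
    fun_prop
  have e1 : (fun ω : ℕ → 𝒳 => G (fun i => ω i) * D (ω (n + 1)) (ω n)) =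
      fun ω => H ((fun i : Fin (n + 1) => ω i), ω (n + 1)) := by
    ext ω; simp [hH]
  rw [e1] at hint ⊢
  have hint' : Integrable H ((M.law x).map
      (fun ω => ((fun i : Fin (n + 1) => ω i), ω (n + 1)))) :=
    (integrable_map_measure hHm.aestronglyMeasurable hmeas.aemeasurable).2 hint
  rw [← integral_map hmeas.aemeasurable (f := H) hHm.aestronglyMeasurable]
  rw [map_past_next] at hint' ⊢
  rw [Measure.integral_compProd hint']
  simp [hH, integral_const_mul, hD0]

/-- Moment bound of order `n ^ (r / 2)` for the martingale with increments `D (X_{j+1}) (X_j)`. -/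
lemma martingale_moment {r : ℝ} (hr : 2 ≤ r) : ∃ C : ℝ, 0 < C ∧ ∀ (x : 𝒳) (D : 𝒳 → 𝒳 → ℝ),
    (Measurable fun q : 𝒳 × 𝒳 => D q.1 q.2) → (∀ u, ∫ v, D v u ∂(M.K u) = 0) →
    ∀ B : ℝ, 0 ≤ B → (∀ j : ℕ, ∫⁻ ω, ‖D (ω (j + 1)) (ω j)‖ₑ ^ r ∂(M.law x) ≤ ENNReal.ofReal B) →
    ∀ n : ℕ, 1 ≤ n → ∫⁻ ω, ‖∑ j ∈ Finset.range n, D (ω (j + 1)) (ω j)‖ₑ ^ r ∂(M.law x)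
      ≤ ENNReal.ofReal (C * (n : ℝ) ^ (r / 2) * B) := by
  obtain ⟨C, hC, hineq⟩ := rpow_add_le_aux hr
  have hr0 : 0 < r := by linarith
  refine ⟨C * Real.exp C, by positivity, ?_⟩
  intro x D hD hD0 B hB hDB n hn
  have hn1 : (1 : ℝ) ≤ n := by exact_mod_cast hn
  have hn0 : (0 : ℝ) < n := by linarith
  have hDm : ∀ j : ℕ, Measurable (fun ω : ℕ → 𝒳 => D (ω (j + 1)) (ω j)) := fun j =>
    hD.comp (g := fun q : 𝒳 × 𝒳 => D q.1 q.2) (f := fun ω : ℕ → 𝒳 => (ω (j + 1), ω j))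
      (by fun_prop)
  have hSm : ∀ k : ℕ, Measurable
      (fun ω : ℕ → 𝒳 => ∑ j ∈ Finset.range k, D (ω (j + 1)) (ω j)) := fun k =>
    Finset.measurable_sum _ fun j _ => hDm j
  have hconv : ∀ f : (ℕ → 𝒳) → ℝ, ∫⁻ ω, ‖f ω‖ₑ ^ r ∂(M.law x) =
      ∫⁻ ω, ENNReal.ofReal (|f ω| ^ r) ∂(M.law x) := by
    intro f
    refine lintegral_congr fun ω => ?_
    rw [← ofReal_norm, Real.norm_eq_abs,
      ENNReal.ofReal_rpow_of_nonneg (abs_nonneg _) hr0.le]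
  have hDint : ∀ j, Integrable (fun ω => |D (ω (j + 1)) (ω j)| ^ r) (M.law x) := by
    intro j
    have := hDm j
    refine ⟨Measurable.aestronglyMeasurable (by fun_prop), ?_⟩
    rw [hasFiniteIntegral_iff_ofReal (ae_of_all _ fun ω => by positivity), ← hconv]
    exact (hDB j).trans_lt ENNReal.ofReal_lt_top
  have hDB' : ∀ j, ∫ ω, |D (ω (j + 1)) (ω j)| ^ r ∂(M.law x) ≤ B := by
    intro j
    rw [← ENNReal.ofReal_le_ofReal_iff hB,
      ofReal_integral_eq_lintegral_ofReal (hDint j) (ae_of_all _ fun ω => by positivity), ← hconv]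
    exact hDB j
  -- The weight `s = n` is fixed along the whole recursion, so the growth factor `1 + C / n`
  -- contributes at most `exp C` over `n` steps.
  have main : ∀ k : ℕ,
      Integrable (fun ω => |∑ j ∈ Finset.range k, D (ω (j + 1)) (ω j)| ^ r) (M.law x) ∧
      ∫ ω, |∑ j ∈ Finset.range k, D (ω (j + 1)) (ω j)| ^ r ∂(M.law x) ≤
        (1 + C / n) ^ k * (k * (C * (n : ℝ) ^ (r / 2 - 1) * B)) := by
    intro k
    induction k with
    | zero => simp [Real.zero_rpow hr0.ne']
    | succ k ih =>
      obtain ⟨ih1, ih2⟩ := ih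
      simp only [Finset.sum_range_succ]
      refine ⟨integrable_rpow_add hr (hSm k) (hDm k) ih1 (hDint k), ?_⟩
      have hcross := integrable_cross hr (hSm k) (hDm k) ih1 (hDint k)
      have horth : ∫ ω, r * ((∑ j ∈ Finset.range k, D (ω (j + 1)) (ω j)) *
          |∑ j ∈ Finset.range k, D (ω (j + 1)) (ω j)| ^ (r - 2)) * D (ω (k + 1)) (ω k)
          ∂(M.law x) = 0 := by
        set S : (Fin (k + 1) → 𝒳) → ℝ := fun w => ∑ j : Fin k, D (w j.succ) (w j.castSucc) with hS
        have hSmeas : Measurable S := Finset.measurable_sum _ fun j _ =>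
          hD.comp (g := fun q : 𝒳 × 𝒳 => D q.1 q.2)
            (f := fun w : Fin (k + 1) → 𝒳 => (w j.succ, w j.castSucc)) (by fun_prop)
        have e : ∀ ω : ℕ → 𝒳, ∑ j ∈ Finset.range k, D (ω (j + 1)) (ω j) =
            S (fun i => ω i) := by
          intro ω; simp [hS, Finset.sum_range]
        simp only [e] at hcross ⊢
        exact M.integral_past_mul_eq_zero x k hD hD0
          (G := fun w => r * (S w * |S w| ^ (r - 2))) (by fun_prop) hcross
      have hstep : ∫ ω, |∑ j ∈ Finset.range k, D (ω (j + 1)) (ω j) + D (ω (k + 1)) (ω k)| ^ r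
          ∂(M.law x) ≤ (1 + C / n) * ∫ ω, |∑ j ∈ Finset.range k, D (ω (j + 1)) (ω j)| ^ r ∂(M.law x)
            + 0 + C * (n : ℝ) ^ (r / 2 - 1) * ∫ ω, |D (ω (k + 1)) (ω k)| ^ r ∂(M.law x) := by
        have hadd : Integrable (fun ω => (1 + C / n) *
            |∑ j ∈ Finset.range k, D (ω (j + 1)) (ω j)| ^ r +
            r * ((∑ j ∈ Finset.range k, D (ω (j + 1)) (ω j)) *
              |∑ j ∈ Finset.range k, D (ω (j + 1)) (ω j)| ^ (r - 2)) * D (ω (k + 1)) (ω k))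
            (M.law x) := (ih1.const_mul _).add hcross
        rw [← horth, ← integral_const_mul, ← integral_const_mul,
          ← integral_add (ih1.const_mul _) hcross,
          ← integral_add hadd ((hDint k).const_mul _)]
        exact integral_mono (integrable_rpow_add hr (hSm k) (hDm k) ih1 (hDint k))
          (hadd.add ((hDint k).const_mul _))
          fun ω => hineq n _ _ hn1
      have hq : 1 ≤ 1 + C / n := by
        have : 0 ≤ C / n := by positivity
        linarith
      set A := C * (n : ℝ) ^ (r / 2 - 1) with hA
      have hA0 : 0 ≤ A := by positivity
      calc _ ≤ _ := hstep
        _ ≤ (1 + C / n) * ((1 + C / n) ^ k * (k * (A * B))) + 0 + A * B := by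
          gcongr
          exact hDB' k
        _ ≤ (1 + C / n) * ((1 + C / n) ^ k * (k * (A * B))) + 0
              + (1 + C / n) ^ (k + 1) * (A * B) := by
          have h1 : (1 : ℝ) ≤ (1 + C / n) ^ (k + 1) := one_le_pow₀ hq
          have h2 : 0 ≤ A * B := by positivity
          nlinarith
        _ = _ := by push_cast; ring
  obtain ⟨h1, h2⟩ := main n
  rw [hconv, ← ofReal_integral_eq_lintegral_ofReal h1 (ae_of_all _ fun ω => by positivity)]
  apply ENNReal.ofReal_le_ofReal
  refine h2.trans ?_
  have h3 : (1 + C / n) ^ n ≤ Real.exp C := by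
    have : 1 + C / n ≤ Real.exp (C / n) := by linarith [Real.add_one_le_exp (C / n)]
    calc (1 + C / n) ^ n ≤ Real.exp (C / n) ^ n := by gcongr
      _ = Real.exp C := by rw [← Real.exp_nat_mul]; congr 1; field_simp
  have h4 : (n : ℝ) ^ (r / 2) = n * (n : ℝ) ^ (r / 2 - 1) := by
    conv_lhs => rw [show r / 2 = 1 + (r / 2 - 1) by ring, Real.rpow_add hn0, Real.rpow_one]
  calc _ ≤ Real.exp C * (n * (C * (n : ℝ) ^ (r / 2 - 1) * B)) := by gcongr
    _ = _ := by rw [h4]; ring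

end MarkovChain

/-! ### Geometric ergodicity and the Poisson equation -/

section Ergodic

variable {𝒳 : Type} [MeasurableSpace 𝒳]

/-- Truncation at height `N + 1` shows that a Bochner bound valid for all `0 < f ≤ V` forces `V`
itself to be integrable. -/
lemma lintegral_le_of_close {μ lam : Measure 𝒳} [IsProbabilityMeasure μ]
    {V : 𝒳 → ℝ} (hV : Measurable V) (hV1 : ∀ y, 1 ≤ V y) (hlam : Integrable V lam) {b : ℝ}
    (hb : ∀ f : 𝒳 → ℝ, Measurable f → (∀ y, 0 < f y) → (∀ y, f y ≤ V y) →
      |(∫ y, f y ∂μ) - ∫ y, f y ∂lam| ≤ b) :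
    ∫⁻ y, ENNReal.ofReal (V y) ∂μ ≤ ENNReal.ofReal ((∫ y, V y ∂lam) + b) := by
  have hsup : ∀ y, ENNReal.ofReal (V y) = ⨆ N : ℕ, ENNReal.ofReal (min (V y) (N + 1)) := by
    intro y
    apply le_antisymm
    · obtain ⟨N, hN⟩ := exists_nat_ge (V y)
      refine le_trans ?_ (le_iSup _ N)
      rw [min_eq_left (by linarith)]
    · exact iSup_le fun N => ENNReal.ofReal_le_ofReal (min_le_left _ _)
  simp only [hsup]
  rw [lintegral_iSup (fun N => by fun_prop)]
  · refine iSup_le fun N => ?_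
    have hpos : ∀ y, 0 < min (V y) ((N : ℝ) + 1) := fun y =>
      lt_min (by linarith [hV1 y]) (by positivity)
    have hint : Integrable (fun y => min (V y) ((N : ℝ) + 1)) μ := by
      refine Integrable.of_bound (C := (N : ℝ) + 1)
        (Measurable.aestronglyMeasurable (by fun_prop)) (ae_of_all _ fun y => ?_)
      rw [Real.norm_eq_abs, abs_of_pos (hpos y)]
      exact min_le_right _ _
    have hint' : Integrable (fun y => min (V y) ((N : ℝ) + 1)) lam := by
      refine hlam.mono' (Measurable.aestronglyMeasurable (by fun_prop)) (ae_of_all _ fun y => ?_)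
      rw [Real.norm_eq_abs, abs_of_pos (hpos y)]
      exact min_le_left _ _
    rw [← ofReal_integral_eq_lintegral_ofReal hint (ae_of_all _ fun y => (hpos y).le)]
    apply ENNReal.ofReal_le_ofReal
    have h1 := hb _ (by fun_prop) hpos (fun y => min_le_left _ _)
    have h2 : ∫ y, min (V y) ((N : ℝ) + 1) ∂lam ≤ ∫ y, V y ∂lam :=
      integral_mono hint' hlam fun y => min_le_left _ _
    linarith [(abs_le.1 h1).2]
  · intro N N' h y
    have : (N : ℝ) ≤ N' := by exact_mod_cast h
    apply ENNReal.ofReal_le_ofReal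
    gcongr

lemma integrable_of_close {μ lam : Measure 𝒳} [IsProbabilityMeasure μ]
    {V : 𝒳 → ℝ} (hV : Measurable V) (hV1 : ∀ y, 1 ≤ V y) (hlam : Integrable V lam) {b : ℝ}
    (hb : ∀ f : 𝒳 → ℝ, Measurable f → (∀ y, 0 < f y) → (∀ y, f y ≤ V y) →
      |(∫ y, f y ∂μ) - ∫ y, f y ∂lam| ≤ b) : Integrable V μ := by
  refine ⟨hV.aestronglyMeasurable, ?_⟩
  rw [hasFiniteIntegral_iff_ofReal (ae_of_all _ fun y => by
    have := hV1 y; simp only [Pi.zero_apply]; linarith)]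
  exact (lintegral_le_of_close hV hV1 hlam hb).trans_lt ENNReal.ofReal_lt_top

/-- The ergodicity bound extends from `0 < f ≤ V` to signed `|h| ≤ V`, writing
`h = 3 f - 2 V` with `f = (2 V + h) / 3`. -/
lemma signed_of_close {μ lam : Measure 𝒳} [IsProbabilityMeasure μ]
    {V : 𝒳 → ℝ} (hV : Measurable V) (hV1 : ∀ y, 1 ≤ V y) (hlam : Integrable V lam) {b : ℝ}
    (hb : ∀ f : 𝒳 → ℝ, Measurable f → (∀ y, 0 < f y) → (∀ y, f y ≤ V y) →
      |(∫ y, f y ∂μ) - ∫ y, f y ∂lam| ≤ b)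
    {h : 𝒳 → ℝ} (hh : Measurable h) (hhV : ∀ y, |h y| ≤ V y) :
    |(∫ y, h y ∂μ) - ∫ y, h y ∂lam| ≤ 5 * b := by
  have hVμ := integrable_of_close hV hV1 hlam hb
  have hhμ : Integrable h μ := hVμ.mono' hh.aestronglyMeasurable (ae_of_all _ hhV)
  have hhl : Integrable h lam := hlam.mono' hh.aestronglyMeasurable (ae_of_all _ hhV)
  have hf : ∀ y, 0 < (2 * V y + h y) / 3 := fun y => by
    have := hV1 y; have := (abs_le.1 (hhV y)).1; linarith
  have hf' : ∀ y, (2 * V y + h y) / 3 ≤ V y := fun y => by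
    have := (abs_le.1 (hhV y)).2; linarith
  have h1 := hb _ (by fun_prop) hf hf'
  have h2 := hb V hV (fun y => by linarith [hV1 y]) (fun y => le_rfl)
  have e : ∀ ν : Measure 𝒳, Integrable V ν → Integrable h ν →
      ∫ y, (2 * V y + h y) / 3 ∂ν = (2 * (∫ y, V y ∂ν) + ∫ y, h y ∂ν) / 3 := by
    intro ν h1 h2
    rw [integral_div, integral_add (h1.const_mul 2) h2, integral_const_mul]
  rw [e μ hVμ hhμ, e lam hlam hhl] at h1
  rw [abs_le] at h1 h2 ⊢
  constructor <;> linarith [h1.1, h1.2, h2.1, h2.2]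

end Ergodic

namespace MarkovChain

variable {𝒳 : Type} [MeasurableSpace 𝒳] (M : MarkovChain 𝒳)

lemma integrable_of_drift {U : 𝒳 → ℝ} {C₁ : ℝ} (hU : Measurable U) (hU1 : ∀ y, 1 ≤ U y)
    (hdrift : ∀ y, ∫⁻ z, ENNReal.ofReal (U z) ∂(M.K y) ≤ ENNReal.ofReal (C₁ * U y))
    {h : 𝒳 → ℝ} (hh : Measurable h) {a : ℝ} (hhU : ∀ y, |h y| ≤ a * U y) (y : 𝒳) :
    Integrable h (M.K y) := by
  have : Integrable U (M.K y) := by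
    refine ⟨hU.aestronglyMeasurable, ?_⟩
    rw [hasFiniteIntegral_iff_ofReal (ae_of_all _ fun y => by
      have := hU1 y; simp only [Pi.zero_apply]; linarith)]
    exact (hdrift y).trans_lt ENNReal.ofReal_lt_top
  exact (this.const_mul a).mono' hh.aestronglyMeasurable (ae_of_all _ hhU)

lemma lintegral_iter_drift {U : 𝒳 → ℝ} {C₁ : ℝ} (hC₁ : 0 ≤ C₁) (hU : Measurable U)
    (hdrift : ∀ y, ∫⁻ z, ENNReal.ofReal (U z) ∂(M.K y) ≤ ENNReal.ofReal (C₁ * U y))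
    (n : ℕ) (y : 𝒳) :
    ∫⁻ z, ENNReal.ofReal (U z) ∂(M.iterK n y) ≤ ENNReal.ofReal (C₁ ^ n * U y) := by
  induction n generalizing y with
  | zero => simp [iterK, Kernel.id_apply, lintegral_dirac' _ hU.ennreal_ofReal]
  | succ n ih =>
    rw [iterK, Kernel.lintegral_comp _ _ _ hU.ennreal_ofReal]
    calc _ ≤ ∫⁻ z, ENNReal.ofReal (C₁ ^ n * U z) ∂(M.K y) := lintegral_mono fun z => ih z
      _ = ENNReal.ofReal (C₁ ^ n) * ∫⁻ z, ENNReal.ofReal (U z) ∂(M.K y) := by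
        rw [← lintegral_const_mul _ hU.ennreal_ofReal]
        refine lintegral_congr fun z => ?_
        rw [ENNReal.ofReal_mul (by positivity)]
      _ ≤ ENNReal.ofReal (C₁ ^ n) * ENNReal.ofReal (C₁ * U y) := by gcongr; exact hdrift y
      _ = _ := by rw [← ENNReal.ofReal_mul (by positivity)]; congr 1; ring

lemma integrable_iter_drift {U : 𝒳 → ℝ} {C₁ : ℝ} (hC₁ : 0 ≤ C₁) (hU : Measurable U)
    (hU1 : ∀ y, 1 ≤ U y)
    (hdrift : ∀ y, ∫⁻ z, ENNReal.ofReal (U z) ∂(M.K y) ≤ ENNReal.ofReal (C₁ * U y))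
    {h : 𝒳 → ℝ} (hh : Measurable h) {a : ℝ} (hhU : ∀ y, |h y| ≤ a * U y) (n : ℕ) (y : 𝒳) :
    Integrable h (M.iterK n y) := by
  have : Integrable U (M.iterK n y) := by
    refine ⟨hU.aestronglyMeasurable, ?_⟩
    rw [hasFiniteIntegral_iff_ofReal (ae_of_all _ fun y => by
      have := hU1 y; simp only [Pi.zero_apply]; linarith)]
    exact (lintegral_iter_drift M hC₁ hU hdrift n y).trans_lt ENNReal.ofReal_lt_top
  exact (this.const_mul a).mono' hh.aestronglyMeasurable (ae_of_all _ hhU)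

/-- One more step of the chain costs at most a factor `C₁` in the `U`-weighted bound. -/
lemma iter_step_bound {U : 𝒳 → ℝ} {C₁ : ℝ} (hC₁ : 0 ≤ C₁) (hU : Measurable U)
    (hU1 : ∀ y, 1 ≤ U y)
    (hdrift : ∀ y, ∫⁻ z, ENNReal.ofReal (U z) ∂(M.K y) ≤ ENNReal.ofReal (C₁ * U y))
    {h : 𝒳 → ℝ} (hh : Measurable h) {a : ℝ} (hhU : ∀ y, |h y| ≤ a * U y) (n : ℕ) {b : ℝ}
    (hb : 0 ≤ b) (hn : ∀ y, |∫ z, h z ∂(M.iterK n y)| ≤ b * U y) (y : 𝒳) :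
    |∫ z, h z ∂(M.iterK (n + 1) y)| ≤ b * C₁ * U y := by
  have hint := integrable_iter_drift M hC₁ hU hU1 hdrift hh hhU (n + 1) y
  have hUint := integrable_of_drift M hU hU1 hdrift hU (a := 1)
    (fun y => by rw [abs_of_nonneg (by linarith [hU1 y]), one_mul]) y
  have hUle : ∫ z, U z ∂(M.K y) ≤ C₁ * U y := by
    have h0 : 0 ≤ C₁ * U y := mul_nonneg hC₁ (by linarith [hU1 y])
    rw [← ENNReal.ofReal_le_ofReal_iff h0, ofReal_integral_eq_lintegral_ofReal hUint
      (ae_of_all _ fun z => by have := hU1 z; simp only [Pi.zero_apply]; linarith)]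
    exact hdrift y
  rw [iterK] at hint ⊢
  rw [Kernel.integral_comp hint]
  calc |∫ z, ∫ w, h w ∂(M.iterK n z) ∂(M.K y)| ≤ ∫ z, b * U z ∂(M.K y) := by
        rw [← Real.norm_eq_abs]
        exact norm_integral_le_of_norm_le (hUint.const_mul b) (ae_of_all _ hn)
    _ = b * ∫ z, U z ∂(M.K y) := integral_const_mul _ _
    _ ≤ b * (C₁ * U y) := by gcongr
    _ = _ := by ring

/-- Solution of the Poisson equation `ĝ - P ĝ = h` as the series of the iterates of `h`. -/
lemma exists_poisson {U : 𝒳 → ℝ} {C₁ : ℝ} (hC₁ : 0 ≤ C₁) (hU : Measurable U)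
    (hU1 : ∀ y, 1 ≤ U y)
    (hdrift : ∀ y, ∫⁻ z, ENNReal.ofReal (U z) ∂(M.K y) ≤ ENNReal.ofReal (C₁ * U y))
    {h : 𝒳 → ℝ} (hh : Measurable h) {a : ℝ} (hhU : ∀ y, |h y| ≤ a * U y) {b : ℕ → ℝ}
    (hbs : Summable b) (hn : ∀ n y, |∫ z, h z ∂(M.iterK n y)| ≤ b n * U y) :
    ∃ G : 𝒳 → ℝ, Measurable G ∧ (∀ y, |G y| ≤ (∑' n, b n) * U y) ∧
      (∀ y, Integrable G (M.K y)) ∧ ∀ y, ∫ z, G z ∂(M.K y) = G y - h y := by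
  set H : ℕ → 𝒳 → ℝ := fun n y => ∫ z, h z ∂(M.iterK n y) with hH
  have hHm : ∀ n, Measurable (H n) := fun n =>
    (hh.stronglyMeasurable.integral_kernel (κ := M.iterK n)).measurable
  have hsum : ∀ y, Summable (fun n => H n y) := fun y =>
    Summable.of_norm_bounded (hbs.mul_right (U y)) fun n => hn n y
  have hb_le : ∀ y, |∑' n, H n y| ≤ (∑' n, b n) * U y := by
    intro y
    rw [← tsum_mul_right]
    rw [← Real.norm_eq_abs]
    exact tsum_of_norm_bounded (hbs.mul_right (U y)).hasSum fun n => hn n y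
  have hGm : Measurable (fun y => ∑' n, H n y) := by
    refine measurable_of_tendsto_metrizable (f := fun N y => ∑ n ∈ Finset.range N, H n y)
      (fun N => Finset.measurable_sum _ fun n _ => hHm n) ?_
    rw [tendsto_pi_nhds]
    exact fun y => (hsum y).hasSum.tendsto_sum_nat
  have hH0 : ∀ y, H 0 y = h y := fun y => by
    simp [hH, iterK, Kernel.id_apply, integral_dirac' _ _ hh.stronglyMeasurable]
  have hHs : ∀ n y, ∫ z, H n z ∂(M.K y) = H (n + 1) y := by
    intro n y
    have hint := integrable_iter_drift M hC₁ hU hU1 hdrift hh hhU (n + 1) y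
    simp only [hH]
    rw [iterK] at hint ⊢
    rw [Kernel.integral_comp hint]
  refine ⟨fun y => ∑' n, H n y, hGm, hb_le,
    integrable_of_drift M hU hU1 hdrift hGm hb_le, fun y => ?_⟩
  have hUint := integrable_of_drift M hU hU1 hdrift hU (a := 1)
    (fun y => by rw [abs_of_nonneg (by linarith [hU1 y]), one_mul]) y
  have hs := hasSum_integral_of_dominated_convergence (μ := M.K y) (F := H)
    (f := fun z => ∑' n, H n z) (fun n z => b n * U z)
    (fun n => (hHm n).aestronglyMeasurable) (fun n => ae_of_all _ (hn n))
    (ae_of_all _ fun z => hbs.mul_right (U z))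
    (by simp only [tsum_mul_right]; exact hUint.const_mul _)
    (ae_of_all _ fun z => (hsum z).hasSum)
  simp only [hHs] at hs
  change _ = (∑' n, H n y) - h y
  rw [← hs.tsum_eq, (hsum y).tsum_eq_zero_add, hH0]
  ring

end MarkovChain

namespace MarkovChain

variable {𝒳 : Type} [MeasurableSpace 𝒳] (M : MarkovChain 𝒳)

/-- Under geometric ergodicity along residue classes, the class of `1` modulo `p` alone yields
a drift bound `P U ≤ C₁ U` with `U = V (1 % p)`, hence geometric `U`-convergence of all iterates of
`g̃`, a Poisson solution dominated by `U`, and equality of all the limits `lam ι (g̃)`. -/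
lemma exists_poisson_of_ergodic (p : ℕ) (hp : 1 ≤ p)
    (V : Fin p → 𝒳 → ℝ) (hVmeas : ∀ ι, Measurable (V ι)) (hV1 : ∀ ι x, 1 ≤ V ι x)
    (lam : Fin p → Measure 𝒳)
    (hlamV : ∀ ι, Integrable (V ι) (lam ι))
    (R κ : Fin p → ℝ) (hR : ∀ ι, 0 < R ι) (hκ : ∀ ι, 0 < κ ι)
    (hB1' : ∀ (ι : Fin p) (l : ℕ) (x : 𝒳) (f : 𝒳 → ℝ), Measurable f →
      (∀ y, 0 < f y) → (∀ y, f y ≤ V ι y) →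
      |(∫ ω, f (ω (p * l + (ι : ℕ))) ∂(M.law x)) - ∫ y, f y ∂(lam ι)|
        ≤ R ι * V ι x * Real.exp (-(κ ι) * l))
    (f : 𝒳 → ℝ) (hf : Measurable f) (hfV : ∀ (x : 𝒳) (ι : Fin p), |f x| ≤ V ι x) :
    ∃ (c A : ℝ) (G : 𝒳 → ℝ), 0 ≤ A ∧ Measurable G ∧
      (∀ y, |G y| ≤ A * V ⟨1 % p, Nat.mod_lt _ hp⟩ y) ∧
      (∀ y, Integrable G (M.K y)) ∧ (∀ y, ∫ z, G z ∂(M.K y) = G y - (f y - c)) ∧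
      ∀ (_ : 𝒳) (ι : Fin p), ∫ y, f y ∂(lam ι) = c := by
  set ι₀ : Fin p := ⟨1 % p, Nat.mod_lt _ hp⟩ with hι₀
  have hp0 : (0 : ℝ) < p := by exact_mod_cast hp
  have hclose : ∀ (ι : Fin p) (l : ℕ) (y : 𝒳) (f : 𝒳 → ℝ), Measurable f →
      (∀ y, 0 < f y) → (∀ y, f y ≤ V ι y) →
      |(∫ z, f z ∂(M.iterK (p * l + (ι : ℕ)) y)) - ∫ y, f y ∂(lam ι)|
        ≤ R ι * V ι y * Real.exp (-(κ ι) * l) := by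
    intro ι l y f hf h0 h1
    rw [← integral_eval M y _ hf]
    exact hB1' ι l y f hf h0 h1
  have hsigned : ∀ (ι : Fin p) (l : ℕ) (y : 𝒳),
      |(∫ z, f z ∂(M.iterK (p * l + (ι : ℕ)) y)) - ∫ y, f y ∂(lam ι)|
        ≤ 5 * (R ι * V ι y * Real.exp (-(κ ι) * l)) := fun ι l y =>
    signed_of_close (hVmeas ι) (hV1 ι) (hlamV ι) (hclose ι l y) hf (fun z => hfV z ι)
  set U := V ι₀ with hUdef
  have hU : Measurable U := hVmeas ι₀
  have hU1 : ∀ y, 1 ≤ U y := hV1 ι₀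
  have hlamU : 0 ≤ ∫ y, U y ∂(lam ι₀) := integral_nonneg fun y => by
    have := hU1 y; simp only [Pi.zero_apply]; linarith
  set C₁ := (∫ y, U y ∂(lam ι₀)) + R ι₀ + 1 with hC₁def
  have hR0 := hR ι₀
  have hκ0 := hκ ι₀
  have hC₁ : 1 ≤ C₁ := by linarith
  -- One step of the chain is `p * 0 + 1` if `p ≥ 2`, and `1 * 1 + 0` if `p = 1`.
  have hone : ∃ l : ℕ, p * l + (ι₀ : ℕ) = 1 := by
    rcases hp.eq_or_lt with h | h
    · subst h; exact ⟨1, by simp [hι₀]⟩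
    · exact ⟨0, by simp [hι₀, Nat.mod_eq_of_lt h]⟩
  have hι₀1 : (ι₀ : ℕ) ≤ 1 := Nat.mod_le _ _
  have hdrift : ∀ y, ∫⁻ z, ENNReal.ofReal (U z) ∂(M.K y) ≤ ENNReal.ofReal (C₁ * U y) := by
    intro y
    obtain ⟨l, hl⟩ := hone
    have h := lintegral_le_of_close hU hU1 (hlamV ι₀) (hclose ι₀ l y)
    have hK : M.iterK 1 = M.K := by simp [iterK]
    rw [hl, hK] at h
    refine h.trans (ENNReal.ofReal_le_ofReal ?_)
    have he : Real.exp (-(κ ι₀) * l) ≤ 1 := by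
      rw [Real.exp_le_one_iff]
      have : 0 ≤ κ ι₀ * l := by positivity
      linarith
    have hUy := hU1 y
    have h1 : R ι₀ * U y * Real.exp (-(κ ι₀) * l) ≤ R ι₀ * U y * 1 := by gcongr
    have h2 : (∫ y, U y ∂(lam ι₀)) * 1 ≤ (∫ y, U y ∂(lam ι₀)) * U y := by gcongr
    rw [hC₁def]
    nlinarith
  set c := ∫ y, f y ∂(lam ι₀) with hc
  have hfU : ∀ y, |f y| ≤ 1 * U y := fun y => by rw [one_mul]; exact hfV y ι₀
  have hhm : Measurable (fun y => f y - c) := by fun_prop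
  have hhU : ∀ y, |f y - c| ≤ (1 + |c|) * U y := by
    intro y
    have h1 := hfU y
    have h2 := abs_sub (f y) c
    have h3 := hU1 y
    nlinarith [abs_nonneg c]
  have hfint := integrable_iter_drift M (by linarith) hU hU1 hdrift hf hfU
  have hsub : ∀ n y, ∫ z, (f z - c) ∂(M.iterK n y) = (∫ z, f z ∂(M.iterK n y)) - c := by
    intro n y
    rw [integral_sub (hfint n y) (integrable_const c)]
    simp
  have hstep : ∀ (m l : ℕ) (y : 𝒳), |∫ z, (f z - c) ∂(M.iterK (p * l + (ι₀ : ℕ) + m) y)| ≤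
      5 * R ι₀ * Real.exp (-(κ ι₀) * l) * C₁ ^ m * U y := by
    intro m
    induction m with
    | zero =>
      intro l y
      rw [add_zero, hsub]
      refine (hsigned ι₀ l y).trans (le_of_eq ?_)
      ring
    | succ m ih =>
      intro l y
      refine (iter_step_bound M (by linarith) hU hU1 hdrift hhm hhU _ (by positivity)
        (ih l) y).trans (le_of_eq ?_)
      ring
  set B₀ := 5 * R ι₀ * Real.exp (2 * κ ι₀) * C₁ ^ p + (1 + |c|) with hB₀
  set q := Real.exp (-(κ ι₀) / p) with hq
  have hq1 : q < 1 := by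
    rw [hq, Real.exp_lt_one_iff, neg_div]
    have : 0 < κ ι₀ / p := by positivity
    linarith
  have hq0 : 0 ≤ q := (Real.exp_pos _).le
  have hbound : ∀ n y, |∫ z, (f z - c) ∂(M.iterK n y)| ≤ B₀ * q ^ n * U y := by
    intro n y
    have hUy := hU1 y
    rcases lt_or_ge n (ι₀ : ℕ) with hlt | hge
    · have hn0 : n = 0 := by omega
      subst hn0
      rw [pow_zero, mul_one, iterK, Kernel.id_apply, integral_dirac' _ _ hhm.stronglyMeasurable]
      refine (hhU y).trans ?_
      have : 0 ≤ 5 * R ι₀ * Real.exp (2 * κ ι₀) * C₁ ^ p := by positivity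
      rw [hB₀]
      nlinarith
    · set l := (n - (ι₀ : ℕ)) / p with hl
      set m := (n - (ι₀ : ℕ)) % p with hm
      have hn : p * l + (ι₀ : ℕ) + m = n := by
        have := Nat.div_add_mod (n - (ι₀ : ℕ)) p
        rw [← hl, ← hm] at this
        omega
      have hmp : m < p := Nat.mod_lt _ hp
      have h1 := hstep m l y
      rw [hn] at h1
      refine h1.trans ?_
      have h2 : C₁ ^ m ≤ C₁ ^ p := pow_le_pow_right₀ hC₁ hmp.le
      have h3 : Real.exp (-(κ ι₀) * l) ≤ Real.exp (2 * κ ι₀) * q ^ n := by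
        rw [hq, ← Real.exp_nat_mul, ← Real.exp_add, Real.exp_le_exp]
        have h4 : (n : ℝ) ≤ p * (l + 2) := by
          have : n ≤ p * (l + 2) := by
            have : (ι₀ : ℕ) < p := ι₀.2
            nlinarith
          exact_mod_cast this
        have h5 : (n : ℝ) / p ≤ l + 2 := by rw [div_le_iff₀ hp0]; linarith
        have h6 : (n : ℝ) * (-(κ ι₀) / p) = -(κ ι₀ * (n / p)) := by ring
        rw [h6]
        nlinarith
      have h7 : 0 ≤ (1 + |c|) * q ^ n * U y := by positivity
      calc _ ≤ 5 * R ι₀ * (Real.exp (2 * κ ι₀) * q ^ n) * C₁ ^ p * U y := by gcongr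
        _ ≤ _ := by rw [hB₀]; nlinarith
  have hbs : Summable (fun n => B₀ * q ^ n) := (summable_geometric_of_lt_one hq0 hq1).mul_left _
  obtain ⟨G, hG1, hG2, hG3, hG4⟩ :=
    exists_poisson M (by linarith) hU hU1 hdrift hhm hhU hbs hbound
  refine ⟨c, ∑' n, B₀ * q ^ n, G, tsum_nonneg fun n => by positivity, hG1, hG2, hG3, hG4, ?_⟩
  intro y ι
  -- Both constants are limits of `P ^ (p l + ι) g̃ (y)` as `l → ∞`.
  have hlim1 : Tendsto (fun n => ∫ z, f z ∂(M.iterK n y)) atTop (nhds c) := by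
    rw [tendsto_iff_norm_sub_tendsto_zero]
    refine squeeze_zero (fun n => norm_nonneg _) (g := fun n => B₀ * q ^ n * U y) ?_ ?_
    · intro n
      rw [← hsub, Real.norm_eq_abs]
      exact hbound n y
    · have := ((tendsto_pow_atTop_nhds_zero_of_lt_one hq0 hq1).const_mul B₀).mul_const (U y)
      simpa using this
  have hlim2 : Tendsto (fun l : ℕ => ∫ z, f z ∂(M.iterK (p * l + (ι : ℕ)) y)) atTop
      (nhds (∫ y, f y ∂(lam ι))) := by
    rw [tendsto_iff_norm_sub_tendsto_zero]
    refine squeeze_zero (fun n => norm_nonneg _) (fun l => hsigned ι l y) ?_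
    have h1 : Tendsto (fun l : ℕ => Real.exp (-(κ ι) * l)) atTop (nhds 0) := by
      have h2 : Tendsto (fun l : ℕ => κ ι * (l : ℝ)) atTop atTop :=
        tendsto_natCast_atTop_atTop.const_mul_atTop (hκ ι)
      refine (Real.tendsto_exp_neg_atTop_nhds_zero.comp h2).congr fun l => ?_
      simp
    have := (h1.const_mul (R ι * V ι y)).const_mul 5
    simpa using this
  refine tendsto_nhds_unique hlim2 (hlim1.comp ?_)
  refine tendsto_atTop_mono (fun l => ?_) tendsto_id
  simp only [id]
  nlinarith

end MarkovChain

/-! ### Moments of the Poisson solution -/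

lemma ENNReal.rpow_add_four_le {r : ℝ} (hr : 0 ≤ r) (a b c d : ℝ≥0∞) :
    (a + b + c + d) ^ r ≤ 4 ^ r * (a ^ r + b ^ r + c ^ r + d ^ r) := by
  set m := max (max a b) (max c d) with hm
  have h1 : a + b + c + d ≤ 4 * m := by
    have ha : a ≤ m := le_max_of_le_left (le_max_left _ _)
    have hb : b ≤ m := le_max_of_le_left (le_max_right _ _)
    have hc : c ≤ m := le_max_of_le_right (le_max_left _ _)
    have hd : d ≤ m := le_max_of_le_right (le_max_right _ _)
    calc a + b + c + d ≤ m + m + m + m := by gcongr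
      _ = 4 * m := by ring
  have h2 : m ^ r ≤ a ^ r + b ^ r + c ^ r + d ^ r := by
    have hmono : Monotone (fun t : ℝ≥0∞ => t ^ r) := ENNReal.monotone_rpow_of_nonneg hr
    have e : m ^ r = max (max (a ^ r) (b ^ r)) (max (c ^ r) (d ^ r)) := by
      rw [hm, hmono.map_max, hmono.map_max, hmono.map_max]
    rw [e, add_assoc]
    refine max_le ((max_le_add_of_nonneg (zero_le) (zero_le)).trans le_self_add)
      ((max_le_add_of_nonneg (zero_le) (zero_le)).trans le_add_self)
  calc (a + b + c + d) ^ r ≤ (4 * m) ^ r := by gcongr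
    _ = 4 ^ r * m ^ r := ENNReal.mul_rpow_of_nonneg _ _ hr
    _ ≤ _ := by gcongr

lemma enorm_rpow_eq {r : ℝ} (hr : 0 ≤ r) (a : ℝ) : ‖a‖ₑ ^ r = ENNReal.ofReal (|a| ^ r) := by
  rw [← ofReal_norm, Real.norm_eq_abs, ENNReal.ofReal_rpow_of_nonneg (abs_nonneg _) hr]

namespace MarkovChain

variable {𝒳 : Type} [MeasurableSpace 𝒳] (M : MarkovChain 𝒳)

/-- Uniform-in-time moments of the Poisson solution. The weight `U` is controlled only at times
congruent to `1` modulo `p`; other times are reached by descending from the next such time with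
`G = (f - c) + P G` and Jensen's inequality. -/
lemma poisson_moment (p : ℕ) (hp : 1 ≤ p) {r : ℝ} (hr : 2 ≤ r) {U f G : 𝒳 → ℝ} {c A : ℝ}
    (hf : Measurable f) (hU1 : ∀ y, 1 ≤ U y) (hU : Measurable U) (hA : 0 ≤ A)
    (hG : Measurable G) (hGU : ∀ y, |G y| ≤ A * U y)
    (hGP : ∀ y, ∫ z, G z ∂(M.K y) = G y - (f y - c)) :
    ∃ D : NNReal, ∀ (x : 𝒳) (Y : ℝ≥0∞),
      (∀ k : ℕ, ∫⁻ ω, ‖f (ω k)‖ₑ ^ r ∂(M.law x) ≤ Y) →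
      (∀ j : ℕ, ∫⁻ ω, ENNReal.ofReal (U (ω (p * j + 1 % p)) ^ r) ∂(M.law x) ≤ Y) →
      ∀ k : ℕ, ∫⁻ ω, ‖G (ω k)‖ₑ ^ r ∂(M.law x) ≤ D * (1 + Y) := by
  have hr0 : 0 ≤ r := by linarith
  have key : ∀ m : ℕ, ∃ D : NNReal, ∀ (x : 𝒳) (Y : ℝ≥0∞),
      (∀ k : ℕ, ∫⁻ ω, ‖f (ω k)‖ₑ ^ r ∂(M.law x) ≤ Y) →
      (∀ j : ℕ, ∫⁻ ω, ENNReal.ofReal (U (ω (p * j + 1 % p)) ^ r) ∂(M.law x) ≤ Y) →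
      ∀ b ≤ m, ∀ k : ℕ, (k + b) % p = 1 % p →
        ∫⁻ ω, ‖G (ω k)‖ₑ ^ r ∂(M.law x) ≤ D * (1 + Y) := by
    intro m
    induction m with
    | zero =>
      refine ⟨(A ^ r).toNNReal, fun x Y _ hY b hb k hk => ?_⟩
      have hb0 : b = 0 := by omega
      subst hb0
      rw [add_zero] at hk
      have hk' : k = p * (k / p) + 1 % p := by rw [← hk]; exact (Nat.div_add_mod k p).symm
      have h1 := hY (k / p)
      rw [← hk'] at h1
      calc ∫⁻ ω, ‖G (ω k)‖ₑ ^ r ∂(M.law x)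
          ≤ ∫⁻ ω, ENNReal.ofReal (A ^ r) * ENNReal.ofReal (U (ω k) ^ r) ∂(M.law x) := by
            refine lintegral_mono fun ω => ?_
            have hUp : 0 ≤ U (ω k) := by linarith [hU1 (ω k)]
            rw [enorm_rpow_eq hr0, ← ENNReal.ofReal_mul (by positivity),
              ← Real.mul_rpow hA hUp]
            exact ENNReal.ofReal_le_ofReal
              (Real.rpow_le_rpow (abs_nonneg _) (hGU _) hr0)
        _ = ENNReal.ofReal (A ^ r) * ∫⁻ ω, ENNReal.ofReal (U (ω k) ^ r) ∂(M.law x) :=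
            lintegral_const_mul _ (by fun_prop)
        _ ≤ ENNReal.ofReal (A ^ r) * (1 + Y) := by gcongr; exact h1.trans le_add_self
    | succ m ih =>
      obtain ⟨D, hD⟩ := ih
      refine ⟨4 ^ r * (1 + ‖c‖₊ ^ r + D), fun x Y hfY hY b hb k hk => ?_⟩
      have hcoe : ((4 ^ r * (1 + ‖c‖₊ ^ r + D) : NNReal) : ℝ≥0∞) =
          4 ^ r * (1 + ‖c‖ₑ ^ r + D) := by
        push_cast [ENNReal.coe_rpow_of_nonneg _ hr0]
        rfl
      rw [hcoe]
      have h4 : (1 : ℝ≥0∞) ≤ 4 ^ r := ENNReal.one_le_rpow (by norm_num) (by linarith)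
      rcases Nat.lt_or_ge m b with hmb | hmb
      · have hb' : b = m + 1 := by omega
        have h1 := hD x Y hfY hY m le_rfl (k + 1) (by rw [← hk, hb']; congr 1; ring)
        have h2 := (M.lintegral_rpow_integral_le x k (by linarith : 1 ≤ r) hG).trans h1
        have hIm : Measurable (fun y => ∫ z, G z ∂(M.K y)) :=
          (hG.stronglyMeasurable.integral_kernel (κ := M.K)).measurable
        have hpt : ∀ y, ‖G y‖ₑ ^ r ≤
            4 ^ r * (‖f y‖ₑ ^ r + ‖c‖ₑ ^ r + ‖∫ z, G z ∂(M.K y)‖ₑ ^ r + 0) := by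
          intro y
          have e : G y = f y - c + ∫ z, G z ∂(M.K y) := by rw [hGP]; ring
          have e2 : ‖G y‖ₑ ≤ ‖f y‖ₑ + ‖c‖ₑ + ‖∫ z, G z ∂(M.K y)‖ₑ + 0 := by
            rw [add_zero]
            conv_lhs => rw [e]
            exact (enorm_add_le _ _).trans (by gcongr; exact enorm_sub_le)
          have h0 : (0 : ℝ≥0∞) ^ r = 0 := ENNReal.zero_rpow_of_pos (by linarith)
          calc _ ≤ _ := ENNReal.rpow_le_rpow e2 hr0
            _ ≤ _ := ENNReal.rpow_add_four_le hr0 _ _ _ _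
            _ = _ := by rw [h0]
        calc ∫⁻ ω, ‖G (ω k)‖ₑ ^ r ∂(M.law x)
            ≤ ∫⁻ ω, 4 ^ r * (‖f (ω k)‖ₑ ^ r + ‖c‖ₑ ^ r + ‖∫ z, G z ∂(M.K (ω k))‖ₑ ^ r + 0)
                ∂(M.law x) := lintegral_mono fun ω => hpt (ω k)
          _ = 4 ^ r * (∫⁻ ω, ‖f (ω k)‖ₑ ^ r ∂(M.law x) + ‖c‖ₑ ^ r
                + ∫⁻ ω, ‖∫ z, G z ∂(M.K (ω k))‖ₑ ^ r ∂(M.law x)) := by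
              have hm1 : Measurable (fun ω : ℕ → 𝒳 => ‖f (ω k)‖ₑ ^ r) := by fun_prop
              simp only [add_zero]
              rw [lintegral_const_mul' _ _ (by simp),
                lintegral_add_left (by fun_prop), lintegral_add_left hm1]
              simp
          _ ≤ 4 ^ r * (Y + ‖c‖ₑ ^ r + D * (1 + Y)) := by gcongr; exact hfY k
          _ ≤ 4 ^ r * (1 * (1 + Y) + ‖c‖ₑ ^ r * (1 + Y) + D * (1 + Y)) := by
              gcongr
              · rw [one_mul]; exact le_add_self
              · exact le_mul_of_one_le_right zero_le le_self_add
          _ = _ := by ring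
      · refine (hD x Y hfY hY b hmb k hk).trans ?_
        gcongr
        calc (D : ℝ≥0∞) = 1 * D := (one_mul _).symm
          _ ≤ 4 ^ r * (1 + ‖c‖ₑ ^ r + D) := by gcongr; exact le_add_self
  obtain ⟨D, hD⟩ := key (p + 1)
  refine ⟨D, fun x Y h1 h2 k => hD x Y h1 h2 (p - k % p + 1) (by omega) k ?_⟩
  have h3 : k + (p - k % p + 1) = 1 + p * (k / p + 1) := by
    have := Nat.div_add_mod k p
    have := Nat.mod_lt k hp
    rw [mul_add]
    omega
  rw [h3, Nat.add_mul_mod_self_left]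

end MarkovChain

/-! ### The moment bound for the centred average -/

/-- Proposition 2 of the paper. Under conditions (B1') (geometric
ergodicity along the subsequences `pl + ι`, `0 ≤ ι ≤ p-1`, with rates `R ι`, exponents
`κ ι`, invariant probability measures `lam ι` and Lyapunov functions `V ι ≥ 1`) and (B2')
(`|g̃| ≤ min_ι V ι`), for any `r ≥ 2` there is a constant `W̄*_r > 0`, not depending on `x`
or `n`, such that for every `x` with `υ*_{r,max}(x) < ∞` and `g*_r(x) < ∞` and every
`n ≥ 2`, `E_x |W̄_n(g)|^r ≤ W̄*_r (1 + υ*_{r,max}(x) + g*_r(x)) / n^{r/2}`. -/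
theorem statement10
    {𝒳 : Type} [MeasurableSpace 𝒳] (M : MarkovChain 𝒳)
    (p : ℕ) (hp : 1 ≤ p)
    (V : Fin p → 𝒳 → ℝ) (hVmeas : ∀ ι, Measurable (V ι)) (hV1 : ∀ ι x, 1 ≤ V ι x)
    (lam : Fin p → Measure 𝒳) (hlamProb : ∀ ι, IsProbabilityMeasure (lam ι))
    (hlamV : ∀ ι, Integrable (V ι) (lam ι))
    (R κ : Fin p → ℝ) (hR : ∀ ι, 0 < R ι) (hκ : ∀ ι, 0 < κ ι)
    (hB1' : ∀ (ι : Fin p) (l : ℕ) (x : 𝒳) (f : 𝒳 → ℝ), Measurable f →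
      (∀ y, 0 < f y) → (∀ y, f y ≤ V ι y) →
      |(∫ ω, f (ω (p * l + (ι : ℕ))) ∂(M.law x)) - ∫ y, f y ∂(lam ι)|
        ≤ R ι * V ι x * Real.exp (-(κ ι) * l))
    (g : 𝒳 → 𝒳 → ℝ) (hg : Measurable fun q : 𝒳 × 𝒳 => g q.1 q.2)
    (hgInt : ∀ u, Integrable (fun v => g v u) (M.K u))
    (hgtildeInt : ∀ ι, Integrable (M.gtilde g) (lam ι))
    (hB2' : ∀ (x : 𝒳) (ι : Fin p), |M.gtilde g x| ≤ V ι x) :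
    ∀ r : ℝ, 2 ≤ r → ∃ C : ℝ, 0 < C ∧
      ∀ x : 𝒳,
        (⨆ (ι : Fin p) (j : ℕ),
            ∫⁻ ω, ENNReal.ofReal (V ι (ω (p * j + (ι : ℕ))) ^ r) ∂(M.law x)) < ⊤ →
        M.gStar g r x < ⊤ →
        ∀ n : ℕ, 2 ≤ n →
          (∫⁻ ω, ENNReal.ofReal
              (|(∑ j ∈ Finset.range n, g (ω (j + 1)) (ω j)) / n
                  - (1 / (p : ℝ)) * ∑ ι : Fin p, ∫ y, M.gtilde g y ∂(lam ι)| ^ r)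
            ∂(M.law x))
            ≤ ENNReal.ofReal C *
                (1 + (⨆ (ι : Fin p) (j : ℕ),
                    ∫⁻ ω, ENNReal.ofReal (V ι (ω (p * j + (ι : ℕ))) ^ r) ∂(M.law x))
                  + M.gStar g r x) / (n : ℝ≥0∞) ^ (r / 2) := by
  intro r hr
  have hr0 : 0 < r := by linarith
  have hfm := M.measurable_gtilde hg
  obtain ⟨c, A, G, hA, hG, hGU, hGint, hGP, hlamc⟩ := M.exists_poisson_of_ergodic p hp V hVmeas
    hV1 lam hlamV R κ hR hκ hB1' (M.gtilde g) hfm hB2'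
  obtain ⟨D, hD⟩ := M.poisson_moment p hp hr hfm (hV1 _) (hVmeas _) hA hG hGU hGP
  obtain ⟨Cm, hCm, hmart⟩ := M.martingale_moment hr
  -- `B₁` bounds the moments of the martingale increments, `B₂` those of the normalised sum.
  set B₁ : NNReal := 4 ^ r * (1 + ‖c‖₊ ^ r + 2 * D) with hB₁
  set B₂ : NNReal := 4 ^ r * (Cm.toNNReal * B₁ + 2 * D) with hB₂
  have hB₁c : (B₁ : ℝ≥0∞) = 4 ^ r * (1 + ‖c‖ₑ ^ r + 2 * D) := by
    rw [hB₁]; push_cast [ENNReal.coe_rpow_of_nonneg _ hr0.le]; rfl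
  have hB₂c : (B₂ : ℝ≥0∞) = 4 ^ r * (ENNReal.ofReal Cm * B₁ + 2 * D) := by
    rw [hB₂]; push_cast [ENNReal.coe_rpow_of_nonneg _ hr0.le]; rfl
  refine ⟨B₂ + 1, by positivity, ?_⟩
  intro x hΥ hΓ n hn
  set Υ := ⨆ (ι : Fin p) (j : ℕ),
    ∫⁻ ω, ENNReal.ofReal (V ι (ω (p * j + (ι : ℕ))) ^ r) ∂(M.law x) with hΥdef
  set Γ := M.gStar g r x with hΓdef
  set T : ℝ≥0∞ := 1 + Υ + Γ with hT
  have hTtop : T ≠ ⊤ := by simp [hT, hΥ.ne, hΓ.ne]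
  have hT1 : 1 ≤ T := by rw [hT, add_assoc]; exact le_self_add
  have hΥT : 1 + Υ ≤ T := le_self_add
  have hΓT : Γ ≤ T := le_add_self
  have hVΥ : ∀ (ι : Fin p) (j : ℕ),
      ∫⁻ ω, ENNReal.ofReal (V ι (ω (p * j + (ι : ℕ))) ^ r) ∂(M.law x) ≤ Υ := fun ι j =>
    le_iSup₂ (f := fun (ι : Fin p) (j : ℕ) =>
      ∫⁻ ω, ENNReal.ofReal (V ι (ω (p * j + (ι : ℕ))) ^ r) ∂(M.law x)) ι j
  have hfΥ : ∀ k : ℕ, ∫⁻ ω, ‖M.gtilde g (ω k)‖ₑ ^ r ∂(M.law x) ≤ Υ := by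
    intro k
    have h := hVΥ ⟨k % p, Nat.mod_lt _ hp⟩ (k / p)
    simp only [Nat.div_add_mod] at h
    refine le_trans (lintegral_mono fun ω => ?_) h
    rw [enorm_rpow_eq hr0.le]
    exact ENNReal.ofReal_le_ofReal (Real.rpow_le_rpow (abs_nonneg _) (hB2' _ _) hr0.le)
  have hGT : ∀ k : ℕ, ∫⁻ ω, ‖G (ω k)‖ₑ ^ r ∂(M.law x) ≤ D * T := by
    intro k
    refine (hD x Υ hfΥ (fun j => hVΥ ⟨1 % p, Nat.mod_lt _ hp⟩ j) k).trans ?_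
    gcongr
  have hgT : ∀ j : ℕ, ∫⁻ ω, ‖g (ω (j + 1)) (ω j)‖ₑ ^ r ∂(M.law x) ≤ T := by
    intro j
    simp only [enorm_rpow_eq hr0.le]
    exact (le_iSup (fun j : ℕ => ∫⁻ ω, ENNReal.ofReal (|g (ω (j + 1)) (ω j)| ^ r)
      ∂(M.law x)) j).trans hΓT
  have hgm : ∀ j : ℕ, Measurable (fun ω : ℕ → 𝒳 => g (ω (j + 1)) (ω j)) := fun j =>
    hg.comp (g := fun q : 𝒳 × 𝒳 => g q.1 q.2) (f := fun ω : ℕ → 𝒳 => (ω (j + 1), ω j))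
      (by fun_prop)
  have hlint4 : ∀ f₁ f₂ f₃ f₄ : (ℕ → 𝒳) → ℝ, Measurable f₁ → Measurable f₂ → Measurable f₃ →
      Measurable f₄ → ∫⁻ ω, ‖f₁ ω + f₂ ω + f₃ ω + f₄ ω‖ₑ ^ r ∂(M.law x) ≤
        4 ^ r * (∫⁻ ω, ‖f₁ ω‖ₑ ^ r ∂(M.law x) + ∫⁻ ω, ‖f₂ ω‖ₑ ^ r ∂(M.law x)
          + ∫⁻ ω, ‖f₃ ω‖ₑ ^ r ∂(M.law x) + ∫⁻ ω, ‖f₄ ω‖ₑ ^ r ∂(M.law x)) := by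
    intro f₁ f₂ f₃ f₄ h₁ h₂ h₃ h₄
    calc _ ≤ ∫⁻ ω, 4 ^ r * (‖f₁ ω‖ₑ ^ r + ‖f₂ ω‖ₑ ^ r + ‖f₃ ω‖ₑ ^ r + ‖f₄ ω‖ₑ ^ r) ∂(M.law x) := by
          refine lintegral_mono fun ω => ?_
          refine le_trans ?_ (ENNReal.rpow_add_four_le hr0.le _ _ _ _)
          refine ENNReal.rpow_le_rpow ?_ hr0.le
          refine (enorm_add_le _ _).trans ?_
          gcongr
          refine (enorm_add_le _ _).trans ?_
          gcongr
          exact enorm_add_le _ _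
      _ = _ := by
          rw [lintegral_const_mul _ (by fun_prop), lintegral_add_left (by fun_prop),
            lintegral_add_left (by fun_prop), lintegral_add_left (by fun_prop)]
  -- By the Poisson equation `Δ (X_{j+1}) (X_j)` is a martingale increment; the `G` terms telescope.
  set Δ : 𝒳 → 𝒳 → ℝ := fun v u => g v u - c + G v - G u with hΔ
  have hΔm : Measurable fun q : 𝒳 × 𝒳 => Δ q.1 q.2 := by
    simp only [hΔ]
    fun_prop
  have hΔ0 : ∀ u, ∫ v, Δ v u ∂(M.K u) = 0 := by
    intro u
    simp only [hΔ]
    have i1 : Integrable (fun v => g v u - c) (M.K u) := (hgInt u).sub (integrable_const c)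
    have i2 : Integrable (fun v => g v u - c + G v) (M.K u) := i1.add (hGint u)
    rw [integral_sub i2 (integrable_const _), integral_add i1 (hGint u),
      integral_sub (hgInt u) (integrable_const _), hGP]
    simp [MarkovChain.gtilde]
  have hΔB : ∀ j : ℕ, ∫⁻ ω, ‖Δ (ω (j + 1)) (ω j)‖ₑ ^ r ∂(M.law x) ≤
      ENNReal.ofReal (B₁ * T.toReal) := by
    intro j
    rw [ENNReal.ofReal_mul (by positivity), ENNReal.ofReal_toReal hTtop, ENNReal.ofReal_coe_nnreal,
      hB₁c]
    have h := hlint4 (fun ω => g (ω (j + 1)) (ω j)) (fun _ => -c) (fun ω => G (ω (j + 1)))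
      (fun ω => -G (ω j)) (hgm j) (by fun_prop) (by fun_prop) (by fun_prop)
    simp only [enorm_neg, lintegral_const, measure_univ, mul_one, ← sub_eq_add_neg] at h
    calc _ ≤ _ := h
      _ ≤ 4 ^ r * (1 * T + ‖c‖ₑ ^ r * T + D * T + D * T) := by
        gcongr
        · rw [one_mul]; exact hgT j
        · exact le_mul_of_one_le_right zero_le hT1
        · exact hGT _
        · exact hGT _
      _ = _ := by ring
  have hn1 : 1 ≤ n := by omega
  have hn0 : (0 : ℝ) < n := by exact_mod_cast hn1
  have hM := hmart x Δ hΔm hΔ0 (B₁ * T.toReal) (by positivity) hΔB n hn1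
  set N : ℝ≥0∞ := (n : ℝ≥0∞) ^ (r / 2) with hN
  have hN0 : N ≠ 0 := by simp [hN]; omega
  have hNtop : N ≠ ⊤ := by
    rw [hN]
    exact ENNReal.rpow_ne_top_of_nonneg (by positivity) (ENNReal.natCast_ne_top n)
  have hN1 : 1 ≤ N := ENNReal.one_le_rpow (by exact_mod_cast hn1) (by positivity)
  have hM' : ∫⁻ ω, ‖∑ j ∈ Finset.range n, Δ (ω (j + 1)) (ω j)‖ₑ ^ r ∂(M.law x) ≤
      ENNReal.ofReal Cm * N * (B₁ * T) := by
    refine hM.trans (le_of_eq ?_)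
    rw [ENNReal.ofReal_mul (by positivity), ENNReal.ofReal_mul hCm.le,
      ENNReal.ofReal_mul (by positivity), ENNReal.ofReal_toReal hTtop, ENNReal.ofReal_coe_nnreal,
      ← ENNReal.ofReal_rpow_of_pos hn0, ENNReal.ofReal_natCast]
  have hQ : ∫⁻ ω, ‖(∑ j ∈ Finset.range n, Δ (ω (j + 1)) (ω j)) + G (ω 0) + -G (ω n) + 0‖ₑ ^ r
      ∂(M.law x) ≤ N * (B₂ * T) := by
    have hsm : Measurable fun ω : ℕ → 𝒳 => ∑ j ∈ Finset.range n, Δ (ω (j + 1)) (ω j) :=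
      Finset.measurable_sum _ fun j _ =>
        hΔm.comp (g := fun q : 𝒳 × 𝒳 => Δ q.1 q.2) (f := fun ω : ℕ → 𝒳 => (ω (j + 1), ω j))
          (by fun_prop)
    have h := hlint4 _ (fun ω => G (ω 0)) (fun ω => -G (ω n)) (fun _ => 0) hsm
      (by fun_prop) (by fun_prop) (by fun_prop)
    refine h.trans ?_
    rw [hB₂c]
    simp only [enorm_neg, enorm_zero, ENNReal.zero_rpow_of_pos hr0, lintegral_zero, add_zero]
    calc _ ≤ 4 ^ r * (ENNReal.ofReal Cm * N * (B₁ * T) + D * T + D * T) := by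
          gcongr
          · exact hGT _
          · exact hGT _
      _ ≤ 4 ^ r * (ENNReal.ofReal Cm * N * (B₁ * T) + N * (D * T) + N * (D * T)) := by
          have hDN : D * T ≤ N * (D * T) := le_mul_of_one_le_left zero_le hN1
          exact mul_le_mul' le_rfl (add_le_add (add_le_add le_rfl hDN) hDN)
      _ = _ := by ring
  have hcenter : (1 / (p : ℝ)) * ∑ ι : Fin p, ∫ y, M.gtilde g y ∂(lam ι) = c := by
    have hp0 : (p : ℝ) ≠ 0 := by positivity
    simp only [hlamc x]
    simp [hp0]
  -- The factor `(N * N)⁻¹ = n ^ (-r)` comes from dividing the sum by `n`.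
  have hpt : ∀ ω : ℕ → 𝒳, ENNReal.ofReal (|(∑ j ∈ Finset.range n, g (ω (j + 1)) (ω j)) / n
      - (1 / (p : ℝ)) * ∑ ι : Fin p, ∫ y, M.gtilde g y ∂(lam ι)| ^ r) =
      ‖(∑ j ∈ Finset.range n, Δ (ω (j + 1)) (ω j)) + G (ω 0) + -G (ω n) + 0‖ₑ ^ r
        * (N * N)⁻¹ := by
    intro ω
    rw [hcenter]
    have hsum : (∑ j ∈ Finset.range n, Δ (ω (j + 1)) (ω j)) + G (ω 0) + -G (ω n) + 0 =
        (∑ j ∈ Finset.range n, g (ω (j + 1)) (ω j)) - n * c := by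
      have e : ∀ j, Δ (ω (j + 1)) (ω j) = g (ω (j + 1)) (ω j) - c + (G (ω (j + 1)) - G (ω j)) := by
        intro j; simp only [hΔ]; ring
      simp only [e]
      rw [Finset.sum_add_distrib, Finset.sum_range_sub (fun j => G (ω j)), Finset.sum_sub_distrib]
      simp
      ring
    have hNN : N * N = ENNReal.ofReal ((n : ℝ) ^ r) := by
      rw [hN, ← ENNReal.rpow_add _ _ (by simp; omega) (by simp), add_halves,
        ← ENNReal.ofReal_rpow_of_pos hn0, ENNReal.ofReal_natCast]
    rw [hsum, enorm_rpow_eq hr0.le, hNN, ← ENNReal.ofReal_inv_of_pos (by positivity),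
      ← ENNReal.ofReal_mul (by positivity), ← div_eq_mul_inv,
      ← Real.div_rpow (abs_nonneg _) hn0.le]
    congr 2
    rw [show (n : ℝ) = |(n : ℝ)| from (abs_of_pos hn0).symm, ← abs_div, abs_of_pos hn0]
    congr 1
    field_simp
  simp only [hpt]
  rw [lintegral_mul_const' _ _ (by simp [hN0])]
  calc _ ≤ N * (B₂ * T) * (N * N)⁻¹ := by gcongr
    _ = B₂ * T / N := by
      rw [← div_eq_mul_inv, ENNReal.mul_div_mul_left _ _ hN0 hNtop]
    _ ≤ _ := by
      gcongr
      rw [← ENNReal.ofReal_coe_nnreal]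
      exact ENNReal.ofReal_le_ofReal (by linarith)
end
end

section
/- For any 0 < β < 1, any integer m* ≥ |log(1−β)|/|log(1−ϱ_{1,β})| − 1 and any integer k* > m*, the following inclusions hold: Δ(α₂(β,k*), ϱ_{2,β}) ⊆ H(β,k*,m*) ⊆ Δ(α₁(β,m*), ϱ_{1,β}). -/
/-!
Both inclusions are statements about the false-alarm probabilities `P_∞(τ ≤ k)`, which are
nondecreasing in `k`, and about the tails of the geometric prior, `∑_{k ≥ n} ϱ(1-ϱ)^k = (1-ϱ)^n`
(`tsum_geometric_prior_tail`).

For `Δ(α₂,ϱ₂) ⊆ H`, the terms `k ≥ k*` of the weighted false-alarm sum are at least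
`(1-ϱ₂)^{k*} P_∞(τ ≤ k*)`, so `P_∞(τ ≤ k*) ≤ β`; every window involved lies in `{τ ≤ k*}`.

For `H ⊆ Δ(α₁,ϱ₁)`, the window starting at `1` gives `P_∞(τ ≤ m*) ≤ β`, because `τ ≥ 1`. The terms
`k ≤ m*` of the weighted sum then contribute at most `β`, and the terms `k > m*` at most the
prior tail `(1-ϱ₁)^{m*+1}`.
-/

open MeasureTheory Filter Set Topology ENNReal

noncomputable section

/-- A general change-point model: a filtration `F` on `Ω`, probability measures `P k`
(the change occurs immediately after time `k`) and `Pinf` (no change), such that `P k`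
and `Pinf` agree on `F n` for `n ≤ k` and are mutually absolutely continuous
on `F n` for `n > k`. -/
structure ChangePointModel (Ω : Type) [m0 : MeasurableSpace Ω] where
  F : ℕ → MeasurableSpace Ω
  F_le : ∀ n, F n ≤ m0
  F_mono : Monotone F
  F_zero : F 0 = ⊥
  P : ℕ → Measure Ω
  Pinf : Measure Ω
  P_prob : ∀ k, IsProbabilityMeasure (P k)
  Pinf_prob : IsProbabilityMeasure Pinf
  agree : ∀ k n : ℕ, n ≤ k → (P k).trim (F_le n) = Pinf.trim (F_le n)
  ac₁ : ∀ k n : ℕ, k < n → (P k).trim (F_le n) ≪ Pinf.trim (F_le n)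
  ac₂ : ∀ k n : ℕ, k < n → Pinf.trim (F_le n) ≪ (P k).trim (F_le n)

namespace ChangePointModel

variable {Ω : Type} [m0 : MeasurableSpace Ω] (M : ChangePointModel Ω)

/-- The log-likelihood ratio `Z n k = log (d(P k|F n)/d(P∞|F n))`. -/
def Z (n k : ℕ) (ω : Ω) : ℝ :=
  Real.log ((((M.P k).trim (M.F_le n)).rnDeriv (M.Pinf.trim (M.F_le n))) ω).toReal

/-- A detection procedure: a stopping time of the filtration `F` with values in `{1,2,…,∞}`. -/
def IsDetection (τ : Ω → ℕ∞) : Prop :=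
  (∀ ω, 1 ≤ τ ω) ∧ ∀ n : ℕ, MeasurableSet[M.F n] {ω | τ ω ≤ (n : ℕ∞)}

/-- The detection risk `R_ν(τ) = E_ν (τ - ν)⁺`. -/
def risk (ν : ℕ) (τ : Ω → ℕ∞) : ℝ≥0∞ :=
  ∫⁻ ω, ((τ ω - (ν : ℕ∞) : ℕ∞) : ℝ≥0∞) ∂(M.P ν)

/-- The conditional detection risk `R*_ν(τ) = E_ν (τ - ν | τ > ν)`. -/
def crisk (ν : ℕ) (τ : Ω → ℕ∞) : ℝ≥0∞ :=
  M.risk ν τ / M.P ν {ω | (ν : ℕ∞) < τ ω}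

/-- The moment-`ℓ` detection risk `E_ν ((τ - ν)⁺)^ℓ`. -/
def riskPow (ℓ : ℝ) (ν : ℕ) (τ : Ω → ℕ∞) : ℝ≥0∞ :=
  ∫⁻ ω, ((τ ω - (ν : ℕ∞) : ℕ∞) : ℝ≥0∞) ^ ℓ ∂(M.P ν)

/-- The conditional moment-`ℓ` detection risk `E_ν ((τ - ν)^ℓ | τ > ν)`. -/
def criskPow (ℓ : ℝ) (ν : ℕ) (τ : Ω → ℕ∞) : ℝ≥0∞ :=
  M.riskPow ℓ ν τ / M.P ν {ω | (ν : ℕ∞) < τ ω}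

/-- The Bayesian class `Δ(α,ϱ)` of detection procedures with weighted probability of
false alarm at most `α` (geometric prior with parameter `ϱ`). -/
def Delta (α ϱ : ℝ) : Set (Ω → ℕ∞) :=
  {τ | M.IsDetection τ ∧
    ∑' k : ℕ, ENNReal.ofReal (ϱ * (1 - ϱ) ^ k) * M.Pinf {ω | τ ω ≤ (k : ℕ∞)}
      ≤ ENNReal.ofReal α}

/-- The Shiryaev–Roberts statistic `R_n = ∑_{k=1}^n exp (Z_n^{k-1})`. -/
def SRstat (n : ℕ) (ω : Ω) : ℝ :=
  ∑ k ∈ Finset.range n, Real.exp (M.Z n k ω)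

/-- The Shiryaev–Roberts procedure with threshold `h`. -/
def SR (h : ℝ) (ω : Ω) : ℕ∞ :=
  sInf {n : ℕ∞ | ∃ m : ℕ, n = (m : ℕ∞) ∧ 1 ≤ m ∧ h ≤ M.SRstat m ω}

/-- Condition (A1): `Z (k+n) k / n → I` almost surely under `P k`, for every `k`. -/
def CondA1 (I : ℝ) : Prop :=
  ∀ k : ℕ, ∀ᵐ ω ∂(M.P k),
    Tendsto (fun n : ℕ => M.Z (k + n) k ω / n) atTop (𝓝 I)

/-- Condition (A2): uniform complete convergence of `Z (k+n) k / n` to `I`. -/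
def CondA2 (I : ℝ) : Prop :=
  ∀ ε : ℝ, 0 < ε →
    (∑' n : ℕ, ⨆ k : ℕ,
      M.P k {ω | ε < |M.Z (k + (n + 1)) k ω / (n + 1) - I|}) < ⊤

/-- Uniform `r`-complete convergence of `Z (k+n) k / n` to `I`. -/
def CondAr (r I : ℝ) : Prop :=
  ∀ ε : ℝ, 0 < ε →
    (∑' n : ℕ, ENNReal.ofReal ((n + 1 : ℝ) ^ (r - 1)) * ⨆ k : ℕ,
      M.P k {ω | ε < |M.Z (k + (n + 1)) k ω / (n + 1) - I|}) < ⊤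

/-- The class `H(β,k*,m*)` : local probability of a false alarm in windows of
length `m*` starting at `1 ≤ k ≤ k* - m*` is at most `β`. -/
def Hclass (β : ℝ) (kstar mstar : ℕ) : Set (Ω → ℕ∞) :=
  {τ | M.IsDetection τ ∧ ∀ k : ℕ, 1 ≤ k → k + mstar ≤ kstar →
    M.Pinf {ω | (k : ℕ∞) ≤ τ ω ∧ τ ω < ((k + mstar : ℕ) : ℕ∞)} ≤ ENNReal.ofReal β}

/-- The class `H*(β,k*,m*)` : local conditional probability of a false alarm
`P_∞(τ < k+m* | τ > k)` is at most `β` for `1 ≤ k ≤ k* - m*`. -/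
def HclassStar (β : ℝ) (kstar mstar : ℕ) : Set (Ω → ℕ∞) :=
  {τ | M.IsDetection τ ∧ ∀ k : ℕ, 1 ≤ k → k + mstar ≤ kstar →
    M.Pinf {ω | (k : ℕ∞) < τ ω ∧ τ ω < ((k + mstar : ℕ) : ℕ∞)}
        / M.Pinf {ω | (k : ℕ∞) < τ ω} ≤ ENNReal.ofReal β}

end ChangePointModel

/-- `ϱ_{1,β} = 1/(1+|log β|)`. -/
def rho1 (β : ℝ) : ℝ := 1 / (1 + |Real.log β|)

/-- `ϱ_{2,β} = ϱ_{1,β}/(1+|log|log β||)`. -/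
def rho2 (β : ℝ) : ℝ := rho1 β / (1 + |Real.log (|Real.log β|)|)

/-- `α₁(β,m*) = β + (1-ϱ_{1,β})^{m*+1}`. -/
def alpha1 (β : ℝ) (m : ℕ) : ℝ := β + (1 - rho1 β) ^ (m + 1)

/-- `α₂(β,k*) = β (1-ϱ_{2,β})^{k*}`. -/
def alpha2 (β : ℝ) (k : ℕ) : ℝ := β * (1 - rho2 β) ^ k

/-- `α₃(β,k*) = β (1-ϱ_{2,β})^{k*} / (1+β)`. -/
def alpha3 (β : ℝ) (k : ℕ) : ℝ := β * (1 - rho2 β) ^ k / (1 + β)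

lemma rho1_mem_Ioo {β : ℝ} (hβ : β ∈ Set.Ioo (0 : ℝ) 1) : rho1 β ∈ Set.Ioo (0 : ℝ) 1 := by
  have hlog : 0 < |Real.log β| := abs_pos.mpr (Real.log_neg hβ.1 hβ.2).ne
  refine ⟨by unfold rho1; positivity, ?_⟩
  unfold rho1
  rw [div_lt_one (by positivity)]
  linarith

lemma rho2_mem_Ioo {β : ℝ} (hβ : β ∈ Set.Ioo (0 : ℝ) 1) : rho2 β ∈ Set.Ioo (0 : ℝ) 1 := by
  obtain ⟨h0, h1⟩ := rho1_mem_Ioo hβ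
  refine ⟨by unfold rho2; positivity, lt_of_le_of_lt ?_ h1⟩
  exact div_le_self h0.le (le_add_of_nonneg_right (abs_nonneg _))

lemma tsum_geometric_prior_tail {ϱ : ℝ} (hϱ : ϱ ∈ Set.Ioo (0 : ℝ) 1) (n : ℕ) :
    ∑' k : ℕ, ENNReal.ofReal (ϱ * (1 - ϱ) ^ (k + n)) = ENNReal.ofReal ((1 - ϱ) ^ n) := by
  obtain ⟨h0, h1⟩ := hϱ
  have hq : 0 ≤ 1 - ϱ := by linarith
  have hsum : HasSum (fun k : ℕ => ϱ * (1 - ϱ) ^ (k + n)) ((1 - ϱ) ^ n) := by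
    have h := (hasSum_geometric_of_lt_one hq (by linarith)).mul_left (ϱ * (1 - ϱ) ^ n)
    rw [_root_.sub_sub_cancel, mul_right_comm, _root_.mul_inv_cancel₀ h0.ne', one_mul] at h
    refine (funext fun k => ?_ : (fun k : ℕ => ϱ * (1 - ϱ) ^ (k + n)) =
      fun k => ϱ * (1 - ϱ) ^ n * (1 - ϱ) ^ k) ▸ h
    ring
  rw [← ENNReal.ofReal_tsum_of_nonneg (fun k => by positivity) hsum.summable, hsum.tsum_eq]

lemma Delta_subset_Hclass {Ω : Type} [MeasurableSpace Ω] (M : ChangePointModel Ω) {β ϱ : ℝ}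
    (hϱ : ϱ ∈ Set.Ioo (0 : ℝ) 1) (mstar kstar : ℕ) :
    M.Delta (β * (1 - ϱ) ^ kstar) ϱ ⊆ M.Hclass β kstar mstar := by
  rintro τ ⟨hτ, hsum⟩
  refine ⟨hτ, fun k _ hk => ?_⟩
  have hpow : 0 < (1 - ϱ) ^ kstar := pow_pos (by linarith [hϱ.2]) _
  have htail : ENNReal.ofReal ((1 - ϱ) ^ kstar) * M.Pinf {ω | τ ω ≤ (kstar : ℕ∞)} ≤
      ENNReal.ofReal ((1 - ϱ) ^ kstar) * ENNReal.ofReal β :=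
    calc ENNReal.ofReal ((1 - ϱ) ^ kstar) * M.Pinf {ω | τ ω ≤ (kstar : ℕ∞)}
        = ∑' j : ℕ, ENNReal.ofReal (ϱ * (1 - ϱ) ^ (j + kstar)) *
            M.Pinf {ω | τ ω ≤ (kstar : ℕ∞)} := by
          rw [ENNReal.tsum_mul_right, tsum_geometric_prior_tail hϱ]
      _ ≤ ∑' j : ℕ, ENNReal.ofReal (ϱ * (1 - ϱ) ^ (j + kstar)) *
            M.Pinf {ω | τ ω ≤ ((j + kstar : ℕ) : ℕ∞)} := by
          refine ENNReal.tsum_le_tsum fun j => mul_le_mul_right (measure_mono ?_) _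
          intro ω (hω : τ ω ≤ kstar)
          exact hω.trans (by exact_mod_cast Nat.le_add_left kstar j)
      _ ≤ ∑' j : ℕ, ENNReal.ofReal (ϱ * (1 - ϱ) ^ j) * M.Pinf {ω | τ ω ≤ (j : ℕ∞)} :=
          ENNReal.tsum_comp_le_tsum_of_injective (add_left_injective kstar)
            (fun j : ℕ => ENNReal.ofReal (ϱ * (1 - ϱ) ^ j) * M.Pinf {ω | τ ω ≤ (j : ℕ∞)})
      _ ≤ ENNReal.ofReal ((1 - ϱ) ^ kstar) * ENNReal.ofReal β := by
          rwa [← ENNReal.ofReal_mul hpow.le, mul_comm _ β]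
  rw [ENNReal.mul_le_mul_iff_right (by simpa using hpow) ENNReal.ofReal_ne_top] at htail
  refine (measure_mono ?_).trans htail
  rintro ω ⟨-, hω⟩
  exact hω.le.trans (by exact_mod_cast hk)

lemma Hclass_subset_Delta {Ω : Type} [MeasurableSpace Ω] (M : ChangePointModel Ω) {β ϱ : ℝ}
    (hβ : 0 ≤ β) (hϱ : ϱ ∈ Set.Ioo (0 : ℝ) 1) {mstar kstar : ℕ} (hk : mstar < kstar) :
    M.Hclass β kstar mstar ⊆ M.Delta (β + (1 - ϱ) ^ (mstar + 1)) ϱ := by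
  rintro τ ⟨hτ, hH⟩
  refine ⟨hτ, ?_⟩
  have := M.Pinf_prob
  have hwindow : ∀ j ≤ mstar, M.Pinf {ω | τ ω ≤ (j : ℕ∞)} ≤ ENNReal.ofReal β := by
    intro j hj
    refine (measure_mono ?_).trans (hH 1 le_rfl (by omega))
    intro ω (hω : τ ω ≤ j)
    refine ⟨by exact_mod_cast hτ.1 ω, hω.trans_lt ?_⟩
    exact_mod_cast (by omega : j < 1 + mstar)
  have hhead : ∑ j ∈ Finset.range (mstar + 1), ENNReal.ofReal (ϱ * (1 - ϱ) ^ j) ≤ 1 := by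
    have h := tsum_geometric_prior_tail hϱ 0
    simp only [add_zero, pow_zero, ENNReal.ofReal_one] at h
    exact h ▸ ENNReal.sum_le_tsum _
  rw [← ENNReal.summable.sum_add_tsum_nat_add' (k := mstar + 1),
    ENNReal.ofReal_add hβ (pow_nonneg (by linarith [hϱ.2]) _)]
  refine add_le_add ?_ ?_
  · calc ∑ j ∈ Finset.range (mstar + 1),
          ENNReal.ofReal (ϱ * (1 - ϱ) ^ j) * M.Pinf {ω | τ ω ≤ (j : ℕ∞)}
        ≤ ∑ j ∈ Finset.range (mstar + 1),
          ENNReal.ofReal (ϱ * (1 - ϱ) ^ j) * ENNReal.ofReal β := by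
          refine Finset.sum_le_sum fun j hj => mul_le_mul_right (hwindow j ?_) _
          exact Nat.lt_succ_iff.mp (Finset.mem_range.mp hj)
      _ = (∑ j ∈ Finset.range (mstar + 1), ENNReal.ofReal (ϱ * (1 - ϱ) ^ j)) *
          ENNReal.ofReal β := (Finset.sum_mul _ _ _).symm
      _ ≤ ENNReal.ofReal β := mul_le_of_le_one_left' hhead
  · rw [← tsum_geometric_prior_tail hϱ]
    exact ENNReal.tsum_le_tsum fun j => mul_le_of_le_one_right' prob_le_one

/-- For any `0 < β < 1`, any integer
`m* ≥ |log(1-β)|/|log(1-ϱ_{1,β})| - 1` and any integer `k* > m*`, one has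
`Δ(α₂(β,k*),ϱ_{2,β}) ⊆ H(β,k*,m*) ⊆ Δ(α₁(β,m*),ϱ_{1,β})`. -/
theorem statement14
    {Ω : Type} [m0 : MeasurableSpace Ω] (M : ChangePointModel Ω)
    (β : ℝ) (hβ : β ∈ Set.Ioo (0 : ℝ) 1) (mstar kstar : ℕ)
    (hm : |Real.log (1 - β)| / |Real.log (1 - rho1 β)| - 1 ≤ (mstar : ℝ))
    (hm1 : 1 ≤ mstar) (hk : mstar < kstar) :
    M.Delta (alpha2 β kstar) (rho2 β) ⊆ M.Hclass β kstar mstar ∧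
    M.Hclass β kstar mstar ⊆ M.Delta (alpha1 β mstar) (rho1 β) := by
  exact ⟨Delta_subset_Hclass M (rho2_mem_Ioo hβ) mstar kstar,
    Hclass_subset_Delta M hβ.1.le (rho1_mem_Ioo hβ) hk⟩
end
end
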